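/- Let q be a prime power, r ≥ 1, and let t ≥ 2 be an integer. Let f(X) = ∑_{i=0}^{M} A_i X^{q^{k_i}} ∈ F_{q^r}[X] with 0 = k_0 < k_1 < ⋯ < k_M, A_i ≠ 0 for all i, A_M = 1, k_i ≠ t for all i, and k_i ≥ t for all i ≥ 2. Suppose either t divides k_M and k_M ≥ 3t, or t does not divide k_M and k_M ≥ 2t − 1. Then the polynomial C(X,Y) = (f(X)·Y^{q^t} − f(Y)·X^{q^t})/(X^q·Y − X·Y^q) ∈ F_{q^r}[X,Y] has an irreducible factor g ∈ F_{q^r}[X,Y] which remains irreducible in K[X,Y], where K is an algebraic closure of F_{q^r}; that is, the curve C_f has an absolutely irreducible component defined over F_{q^r}. -/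

import Mathlib

/-!
Write `Q = q ^ t`, `R = q ^ (k_M - t)`, and let `a`, `a'` be the degrees in `Y` of two polynomials
whose product is `C` over the algebraic closure. Substitute for `X` an element of large or of small
norm in a complete discretely valued field containing the constants. The zeros in `Y` of the
numerator `f(X) Y ^ Q - f(Y) X ^ Q` then form an `F_q`-vector space whose norm filtration is
explicit, and ramification and wild inertia force the zeros of each factor to be nearly equally
distributed over the steps of this filtration. Since the numerator is separable in `Y` for
`X ≠ 0`, the resultant of the two factors is a monomial in `X`, so the product formula compares its
valuations at zero and at infinity. The resulting identity for `a * a'` fails as soon as each of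
`a`, `a'` is at most twice the other.

On the other hand, an irreducible polynomial over a finite field which is reducible over the
algebraic closure is a product of Frobenius conjugates of equal degree, so if no irreducible factor
of `C` were absolutely irreducible, the factors over the closure could be distributed over two such
products.
-/

/-! ### Descent along the Frobenius automorphism -/

theorem map_prod_range_iterate {M G : Type*} [CommMonoid M] [FunLike G M M] [MonoidHomClass G M M]
    (φ : G) {x : M} {n : ℕ} (hx : φ^[n] x = x) :
    φ (∏ i ∈ Finset.range n, φ^[i] x) = ∏ i ∈ Finset.range n, φ^[i] x := by
  cases n with
  | zero => simp
  | succ n =>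
    rw [map_prod, Finset.prod_range_succ, ← Function.iterate_succ_apply' φ n x, hx,
      Finset.prod_range_succ' (fun i => φ^[i] x)]
    simp only [← Function.iterate_succ_apply' φ, Function.iterate_zero_apply]

section Descent

open MvPolynomial

theorem exists_irreducible_dvd_coeff_eq_one {σ L : Type*} [Field L] {P : MvPolynomial σ L}
    (h₀ : P ≠ 0) (hu : ¬ IsUnit P) : ∃ h, Irreducible h ∧ h ∣ P ∧ ∃ m, coeff m h = 1 := by
  obtain ⟨h, hh, hd⟩ := WfDvdMonoid.exists_irreducible_factor hu h₀
  obtain ⟨m, hm⟩ := ne_zero_iff.1 hh.ne_zero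
  have hunit : IsUnit (C (σ := σ) (coeff m h)⁻¹) := (inv_ne_zero hm).isUnit.map C
  exact ⟨C (coeff m h)⁻¹ * h, (irreducible_isUnit_mul hunit).2 hh, hunit.mul_left_dvd.2 hd, m, by
    rw [coeff_C_mul, inv_mul_cancel₀ hm]⟩

theorem eq_of_associated_of_coeff_eq_one {σ L : Type*} [Field L] {P P' : MvPolynomial σ L}
    {m : σ →₀ ℕ} (hP : coeff m P = 1) (hP' : coeff m P' = 1) (h : Associated P P') : P = P' := by
  obtain ⟨u, rfl⟩ := h
  obtain ⟨r, -, hr⟩ := isUnit_iff_eq_C_of_isReduced.1 u.isUnit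
  rw [hr, mul_comm, coeff_C_mul, hP, mul_one] at hP'
  rw [hr, hP', map_one, mul_one]

theorem isUnit_of_isUnit_map {σ F L : Type*} [Field F] [Field L] [Algebra F L]
    {P : MvPolynomial σ F} (h : IsUnit (map (algebraMap F L) P)) : IsUnit P := by
  rw [MvPolynomial.isUnit_iff] at h ⊢
  simpa only [coeff_map, isUnit_map_iff, ne_eq, isNilpotent_iff_eq_zero, isUnit_iff_ne_zero,
    map_eq_zero] using h

theorem mem_range_algebraMap_of_pow_card_eq {F L : Type*} [Field F] [Fintype F] [Field L]
    [Algebra F L] {a : L} (h : a ^ Fintype.card F = a) :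
    a ∈ Set.range (algebraMap F L) := by
  have hcard := Fintype.one_lt_card (α := F)
  have hs : (Polynomial.X ^ Fintype.card F - Polynomial.X : Polynomial F).Splits := by
    rw [Polynomial.splits_iff_card_roots, FiniteField.roots_X_pow_card_sub_X,
      FiniteField.X_pow_card_sub_X_natDegree_eq _ hcard]
    rfl
  exact hs.mem_range_of_isRoot (FiniteField.X_pow_card_sub_X_ne_zero _ hcard)
    (i := algebraMap F L) (by simp [h])

section Frobenius

variable (F : Type*) {L σ : Type*} [Field F] [Fintype F] [Field L] [Algebra F L]
  [Algebra.IsAlgebraic F L]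

/-- The Frobenius automorphism of `L` over the finite field `F`, acting on coefficients. -/
noncomputable def coeffFrobenius : MvPolynomial σ L ≃ₐ[F] MvPolynomial σ L :=
  mapAlgEquiv σ (FiniteField.frobeniusAlgEquivOfAlgebraic F L)

theorem coeff_coeffFrobenius (P : MvPolynomial σ L) (m : σ →₀ ℕ) :
    coeff m (coeffFrobenius F P) = coeff m P ^ Fintype.card F :=
  coeff_map _ _ _

theorem coeff_coeffFrobenius_iterate (P : MvPolynomial σ L) (m : σ →₀ ℕ) (n : ℕ) :
    coeff m ((coeffFrobenius F)^[n] P) = coeff m P ^ Fintype.card F ^ n := by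
  induction n with
  | zero => simp
  | succ n ih => rw [Function.iterate_succ_apply', coeff_coeffFrobenius, ih, ← pow_mul, pow_succ]

theorem degreeOf_coeffFrobenius (P : MvPolynomial σ L) (j : σ) :
    (coeffFrobenius F P).degreeOf j = P.degreeOf j := by
  classical
  rw [degreeOf_def, degreeOf_def]
  exact congrArg _ (degrees_map_of_injective P
    (FiniteField.frobeniusAlgEquivOfAlgebraic F L).injective)

theorem coeffFrobenius_map (g : MvPolynomial σ F) :
    coeffFrobenius F (map (algebraMap F L) g) = map (algebraMap F L) g := by
  ext m
  rw [coeff_coeffFrobenius, coeff_map, ← map_pow, FiniteField.pow_card]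

variable {F}

theorem exists_map_eq_of_coeffFrobenius_eq {P : MvPolynomial σ L} (h : coeffFrobenius F P = P) :
    ∃ g, map (algebraMap F L) g = P := by
  refine mem_range_map_iff_coeffs_subset.2 fun a ha => ?_
  obtain ⟨m, -, rfl⟩ := mem_coeffs_iff.1 (Finset.mem_coe.1 ha)
  refine mem_range_algebraMap_of_pow_card_eq ?_
  rw [← coeff_coeffFrobenius, h]

theorem mem_periodicPts_coeffFrobenius (P : MvPolynomial σ L) :
    P ∈ Function.periodicPts (coeffFrobenius F) := by
  classical
  let E := IntermediateField.adjoin F (P.coeffs : Set L)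
  have : FiniteDimensional F E := IntermediateField.finiteDimensional_adjoin
    fun x _ => Algebra.IsIntegral.isIntegral x
  have : Finite E := Module.finite_of_finite F
  have := Fintype.ofFinite E
  refine Function.mk_mem_periodicPts (Module.finrank_pos (R := F) (M := E)) ?_
  ext m
  rw [coeff_coeffFrobenius_iterate, ← Module.card_eq_pow_finrank]
  by_cases hm : coeff m P = 0
  · rw [hm, zero_pow Fintype.card_ne_zero]
  · have hmem : coeff m P ∈ E := IntermediateField.subset_adjoin _ _ (coeff_mem_coeffs m hm)
    exact congrArg Subtype.val (FiniteField.pow_card (⟨_, hmem⟩ : E))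

theorem coeffFrobenius_iterate_dvd_map {g : MvPolynomial σ F} {h : MvPolynomial σ L}
    (hd : h ∣ map (algebraMap F L) g) (i : ℕ) :
    (coeffFrobenius F)^[i] h ∣ map (algebraMap F L) g :=
  Function.Iterate.rec (· ∣ map (algebraMap F L) g) hd (fun P hP => by
    rw [← coeffFrobenius_map F g]
    exact map_dvd (coeffFrobenius F) hP) i

theorem irreducible_coeffFrobenius_iterate {h : MvPolynomial σ L} (hh : Irreducible h) (i : ℕ) :
    Irreducible ((coeffFrobenius F)^[i] h) :=
  Function.Iterate.rec Irreducible hh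
    (fun _ => (MulEquiv.irreducible_iff (coeffFrobenius F)).2) i

theorem degreeOf_coeffFrobenius_iterate (h : MvPolynomial σ L) (j : σ) (i : ℕ) :
    ((coeffFrobenius F)^[i] h).degreeOf j = h.degreeOf j :=
  Function.Iterate.rec (fun P : MvPolynomial σ L => P.degreeOf j = h.degreeOf j) rfl
    (fun P hP => (degreeOf_coeffFrobenius F P j).trans hP) i

/-- The product of the distinct conjugates of `h` over `F`. -/
noncomputable def conjugateProd (F : Type*) {L σ : Type*} [Field F] [Fintype F] [Field L]
    [Algebra F L] [Algebra.IsAlgebraic F L] (h : MvPolynomial σ L) : MvPolynomial σ L :=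
  ∏ i ∈ Finset.range (Function.minimalPeriod (coeffFrobenius F) h), (coeffFrobenius F)^[i] h

theorem coeffFrobenius_conjugateProd (h : MvPolynomial σ L) :
    coeffFrobenius F (conjugateProd F h) = conjugateProd F h :=
  map_prod_range_iterate (coeffFrobenius F) Function.iterate_minimalPeriod

theorem conjugateProd_dvd_map {g : MvPolynomial σ F} {h : MvPolynomial σ L} {m : σ →₀ ℕ}
    (hh : Irreducible h) (hm : coeff m h = 1) (hd : h ∣ map (algebraMap F L) g) :
    conjugateProd F h ∣ map (algebraMap F L) g := by
  refine Finset.prod_dvd_of_isRelPrime (fun i hi j hj hij => ?_)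
    fun i _ => coeffFrobenius_iterate_dvd_map hd i
  have hirr := irreducible_coeffFrobenius_iterate (F := F) hh
  have hcoeff : ∀ i, coeff m ((coeffFrobenius F)^[i] h) = 1 := fun i => by
    rw [coeff_coeffFrobenius_iterate, hm, one_pow]
  refine (hirr i).isRelPrime_iff_not_dvd.2 fun hdvd => hij ?_
  exact (Function.iterate_eq_iterate_iff_of_lt_minimalPeriod (Finset.mem_range.1 hi)
    (Finset.mem_range.1 hj)).1 (eq_of_associated_of_coeff_eq_one (hcoeff i) (hcoeff j)
      ((hirr i).associated_of_dvd (hirr j) hdvd))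

theorem dvd_conjugateProd (h : MvPolynomial σ L) : h ∣ conjugateProd F h :=
  Finset.dvd_prod_of_mem (fun i => (coeffFrobenius F)^[i] h) (Finset.mem_range.2
    (Function.minimalPeriod_pos_of_mem_periodicPts (mem_periodicPts_coeffFrobenius h)))

theorem associated_conjugateProd_map {g : MvPolynomial σ F} (hg : Irreducible g)
    {h : MvPolynomial σ L} {m : σ →₀ ℕ} (hh : Irreducible h) (hm : coeff m h = 1)
    (hd : h ∣ map (algebraMap F L) g) :
    Associated (conjugateProd F h) (map (algebraMap F L) g) := by
  have hinj : Function.Injective (map (σ := σ) (algebraMap F L)) :=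
    map_injective _ (algebraMap F L).injective
  obtain ⟨T, hT⟩ := conjugateProd_dvd_map hh hm hd
  have hne : conjugateProd F h ≠ 0 :=
    left_ne_zero_of_mul (hT ▸ (map_ne_zero_iff _ hinj).2 hg.ne_zero)
  have hfix : coeffFrobenius F T = T := by
    have hmap := coeffFrobenius_map (L := L) F g
    rw [hT, map_mul, coeffFrobenius_conjugateProd] at hmap
    exact mul_left_cancel₀ hne hmap
  obtain ⟨N₀, hN₀⟩ := exists_map_eq_of_coeffFrobenius_eq (coeffFrobenius_conjugateProd (F := F) h)
  obtain ⟨T₀, rfl⟩ := exists_map_eq_of_coeffFrobenius_eq hfix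
  have hgNT : g = N₀ * T₀ := hinj (by rw [map_mul, hN₀, hT])
  rcases hg.isUnit_or_isUnit hgNT with hu | hu
  · exact absurd (isUnit_of_dvd_unit (dvd_conjugateProd h) (hN₀ ▸ hu.map _)) hh.not_isUnit
  · exact ⟨(hu.map (map (algebraMap F L))).unit, hT.symm⟩

end Frobenius

/-- A factorisation into two factors, each of whose degrees in the variable `j` is at most twice
the other. -/
def HasBalancedFactorization {σ R : Type*} [CommSemiring R] (j : σ) (P : MvPolynomial σ R) : Prop :=
  ∃ P₁ P₂ : MvPolynomial σ R, P₁ * P₂ = P ∧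
    P₁.degreeOf j ≤ 2 * P₂.degreeOf j ∧ P₂.degreeOf j ≤ 2 * P₁.degreeOf j

namespace HasBalancedFactorization

variable {σ R : Type*} {j : σ}

theorem mul [CommRing R] [IsDomain R] {P Q : MvPolynomial σ R} (hP : HasBalancedFactorization j P)
    (hQ : HasBalancedFactorization j Q) (hP₀ : P ≠ 0) (hQ₀ : Q ≠ 0) :
    HasBalancedFactorization j (P * Q) := by
  obtain ⟨P₁, P₂, rfl, hP₁, hP₂⟩ := hP
  obtain ⟨Q₁, Q₂, rfl, hQ₁, hQ₂⟩ := hQ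
  refine ⟨P₁ * Q₁, P₂ * Q₂, mul_mul_mul_comm _ _ _ _, ?_⟩
  rw [degreeOf_mul_eq (left_ne_zero_of_mul hP₀) (left_ne_zero_of_mul hQ₀),
    degreeOf_mul_eq (right_ne_zero_of_mul hP₀) (right_ne_zero_of_mul hQ₀)]
  omega

theorem of_isUnit [CommRing R] [IsDomain R] {P : MvPolynomial σ R} (hP : IsUnit P) :
    HasBalancedFactorization j P := by
  obtain ⟨r, -, rfl⟩ := isUnit_iff_eq_C_of_isReduced.1 hP
  exact ⟨C r, 1, mul_one _, by simp [degreeOf_C], by simp [degreeOf_C]⟩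

theorem of_associated [CommRing R] [IsDomain R] {P Q : MvPolynomial σ R}
    (hP : HasBalancedFactorization j P) (hP₀ : P ≠ 0) (h : Associated P Q) :
    HasBalancedFactorization j Q := by
  obtain ⟨u, rfl⟩ := h
  exact hP.mul (of_isUnit u.isUnit) hP₀ u.ne_zero

theorem prod_range [CommRing R] [IsDomain R] {P : ℕ → MvPolynomial σ R} {d n : ℕ} (hn : n ≠ 1)
    (hP : ∀ i, P i ≠ 0) (hd : ∀ i, (P i).degreeOf j = d) :
    HasBalancedFactorization j (∏ i ∈ Finset.range n, P i) := by
  refine ⟨∏ i ∈ Finset.range (n / 2), P i, ∏ i ∈ Finset.Ico (n / 2) n, P i,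
    Finset.prod_range_mul_prod_Ico _ (Nat.div_le_self n 2), ?_⟩
  rw [degreeOf_prod_eq _ _ fun i _ => hP i, degreeOf_prod_eq _ _ fun i _ => hP i]
  simp only [hd, Finset.sum_const, Finset.card_range, Nat.card_Ico, smul_eq_mul, ← mul_assoc]
  exact ⟨Nat.mul_le_mul_right _ (by omega), Nat.mul_le_mul_right _ (by omega)⟩

variable {F L : Type*} [Field F] [Finite F] [Field L] [Algebra F L] [Algebra.IsAlgebraic F L]

theorem map_of_irreducible {g : MvPolynomial σ F} (hg : Irreducible g)
    (hmap : ¬ Irreducible (map (algebraMap F L) g)) :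
    HasBalancedFactorization j (map (algebraMap F L) g) := by
  have := Fintype.ofFinite F
  have hg₀ : map (algebraMap F L) g ≠ 0 :=
    (map_ne_zero_iff _ (map_injective _ (algebraMap F L).injective)).2 hg.ne_zero
  obtain ⟨h, hh, hd, m, hm⟩ := exists_irreducible_dvd_coeff_eq_one hg₀
    fun hu => hg.not_isUnit (isUnit_of_isUnit_map hu)
  have hassoc := associated_conjugateProd_map hg hh hm hd
  have hperiod : Function.minimalPeriod (coeffFrobenius F) h ≠ 1 := fun hone => hmap <| by
    rw [conjugateProd, hone, Finset.prod_range_one] at hassoc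
    exact hassoc.irreducible hh
  exact (prod_range hperiod (fun i => (irreducible_coeffFrobenius_iterate hh i).ne_zero)
    (degreeOf_coeffFrobenius_iterate h j)).of_associated (hassoc.ne_zero_iff.2 hg₀) hassoc

theorem map_of_forall_not_irreducible {c : MvPolynomial σ F}
    (h : ∀ g, Irreducible g → g ∣ c → ¬ Irreducible (map (algebraMap F L) g)) :
    HasBalancedFactorization j (map (algebraMap F L) c) := by
  have hinj : Function.Injective (map (σ := σ) (algebraMap F L)) :=
    map_injective _ (algebraMap F L).injective
  induction c using WfDvdMonoid.induction_on_irreducible with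
  | zero => exact ⟨0, 0, by simp, by simp, by simp⟩
  | unit u hu => exact of_isUnit (hu.map _)
  | mul a i ha hi ih =>
    rw [map_mul]
    exact (map_of_irreducible hi (h i hi (dvd_mul_right i a))).mul
      (ih fun g hg hga => h g hg (hga.mul_left i)) ((map_ne_zero_iff _ hinj).2 hi.ne_zero)
      ((map_ne_zero_iff _ hinj).2 ha)

end HasBalancedFactorization

end Descent

section PolynomialFactors

open Polynomial

universe u

/-! ### Complete discretely normed fields -/

/-- The norm of `Ω` is trivial on the field of constants `K`, i.e. constants have norm `0` or `1`.
Since `K` is a field, it is enough to ask for norms at most `1`. -/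
class IsTrivialNormOn (K Ω : Type*) [Field K] [NormedField Ω] [Algebra K Ω] : Prop where
  norm_algebraMap_le_one (c : K) : ‖algebraMap K Ω c‖ ≤ 1

/-- The element `ϖ` generates the (discrete) value group of the normed field `k` and lies in its
maximal ideal. -/
structure IsUniformizer {k : Type*} [NormedField k] (ϖ : k) : Prop where
  ne_zero : ϖ ≠ 0
  norm_lt_one : ‖ϖ‖ < 1
  exists_zpow (a : k) (ha : a ≠ 0) : ∃ j : ℤ, ‖a‖ = ‖ϖ‖ ^ j

section Existence

open LaurentSeries in
/-- Realised by the Laurent series over `K` with the `X`-adic norm. -/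
theorem exists_discretely_normed_field (K : Type u) [Field K] :
    ∃ (k : Type u) (_ : NontriviallyNormedField k) (_ : CompleteSpace k) (_ : IsUltrametricDist k)
      (_ : Algebra K k) (_ : IsTrivialNormOn K k) (ϖ : k), IsUniformizer ϖ := by
  set T : K⸨X⸩ := HahnSeries.single (1 : ℤ) (1 : K) with hT
  have hT0 : T ≠ 0 := by simp [hT]
  have hT1 : Valued.v T < 1 := by
    rw [hT, valuation_single_zpow, ← WithZero.exp_zero, WithZero.exp_lt_exp]
    norm_num
  have hnontrivial : (Valued.v : Valuation K⸨X⸩ _).IsNontrivial :=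
    ⟨_, by simpa using hT0, ne_of_lt hT1⟩
  have harch : MulArchimedean (MonoidWithZeroHom.ValueGroup₀
      (.ofClass (Valued.v : Valuation K⸨X⸩ _))) :=
    MulArchimedean.comap (MonoidWithZeroHom.ValueGroup₀.embedding).toMonoidHom
      MonoidWithZeroHom.ValueGroup₀.embedding_strictMono
  obtain ⟨_⟩ := Valuation.nonempty_rankOne_iff_mulArchimedean.2 harch
  let _ : NontriviallyNormedField K⸨X⸩ :=
    Valued.toNontriviallyNormedField _ (WithZero (Multiplicative ℤ))
  have hconst (c : K) : ‖algebraMap K K⸨X⸩ c‖ ≤ 1 := by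
    rw [Valued.toNormedField.norm_le_one_iff, LaurentSeries.val_le_one_iff_eq_coe]
    exact ⟨PowerSeries.C c, by simp [HahnSeries.algebraMap_apply']⟩
  refine ⟨K⸨X⸩, inferInstance, LaurentSeries.instLaurentSeriesComplete,
    Valued.instIsUltrametricDist _ _, inferInstance, ⟨hconst⟩, T, hT0,
    Valued.toNormedField.norm_lt_one_iff.2 hT1, fun a ha => ⟨-WithZero.log (Valued.v a), ?_⟩⟩
  have hva : Valued.v a ≠ 0 := by simpa using ha
  have hval : Valued.v a = Valued.v (T ^ (-WithZero.log (Valued.v a))) := by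
    rw [map_zpow₀, hT, valuation_single_zpow, ← WithZero.exp_zsmul]
    simp [WithZero.exp_log hva]
  rw [← norm_zpow]
  exact le_antisymm (Valued.toNormedField.norm_le_iff.2 hval.le)
    (Valued.toNormedField.norm_le_iff.2 hval.ge)

theorem exists_isAlgClosed_normedAlgebra (k : Type u) [NontriviallyNormedField k] [CompleteSpace k]
    [IsUltrametricDist k] :
    ∃ (Ω : Type u) (_ : NormedField Ω) (_ : NormedAlgebra k Ω),
      IsUltrametricDist Ω ∧ IsAlgClosed Ω ∧ Algebra.IsAlgebraic k Ω := by
  let _ : NormedField (AlgebraicClosure k) := spectralNorm.normedField k _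
  let _ : NormedAlgebra k (AlgebraicClosure k) := spectralNorm.normedAlgebra k _
  exact ⟨AlgebraicClosure k, inferInstance, inferInstance,
    IsUltrametricDist.isUltrametricDist_of_isNonarchimedean_norm isNonarchimedean_spectralNorm,
    inferInstance, inferInstance⟩

theorem isTrivialNormOn_of_tower (K k Ω : Type*) [Field K] [NormedField k] [NormedField Ω]
    [NormedAlgebra k Ω] [Algebra K k] [Algebra K Ω] [IsScalarTower K k Ω] [IsTrivialNormOn K k] :
    IsTrivialNormOn K Ω where
  norm_algebraMap_le_one c := by
    rw [IsScalarTower.algebraMap_apply K k Ω, norm_algebraMap']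
    exact IsTrivialNormOn.norm_algebraMap_le_one c

end Existence

section Constants

variable {K Ω : Type*} [Field K] [NormedField Ω] [Algebra K Ω]

theorem exists_norm_sub_algebraMap_lt_one [IsAlgClosed K] {P : K[X]} (hP : P.Monic) (ρ : Ω)
    (h : ‖aeval ρ P‖ < 1) : ∃ c : K, P.IsRoot c ∧ ‖ρ - algebraMap K Ω c‖ < 1 := by
  by_contra! hfar
  have hprod : aeval ρ P = (P.roots.map fun c => ρ - algebraMap K Ω c).prod := by
    conv_lhs => rw [(IsAlgClosed.splits P).eq_prod_roots_of_monic hP]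
    rw [map_multiset_prod, Multiset.map_map]
    simp
  refine absurd h (not_lt.2 ?_)
  rw [hprod, ← coe_nnnorm, ← NNReal.coe_one, NNReal.coe_le_coe, ← nnnormHom_apply,
    map_multiset_prod, Multiset.map_map]
  refine Multiset.one_le_prod fun r hr => ?_
  obtain ⟨c, hc, rfl⟩ := Multiset.mem_map.1 hr
  exact hfar c (isRoot_of_mem_roots hc)

variable [IsTrivialNormOn K Ω]

open IsTrivialNormOn

theorem norm_algebraMap_eq_one {c : K} (hc : c ≠ 0) : ‖algebraMap K Ω c‖ = 1 := by
  refine le_antisymm (norm_algebraMap_le_one c) ?_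
  have hinv := norm_algebraMap_le_one (Ω := Ω) c⁻¹
  rw [map_inv₀, norm_inv] at hinv
  exact (inv_le_one₀ (norm_pos_iff.2 (by simpa using hc))).1 hinv

theorem norm_algebraMap_mul_le (c : K) (y : Ω) : ‖algebraMap K Ω c * y‖ ≤ ‖y‖ := by
  rw [norm_mul]
  exact mul_le_of_le_one_left (norm_nonneg y) (norm_algebraMap_le_one c)

theorem eq_of_norm_algebraMap_sub_lt_one {c d : K}
    (h : ‖algebraMap K Ω c - algebraMap K Ω d‖ < 1) : c = d := by
  by_contra hne
  rw [← map_sub, norm_algebraMap_eq_one (sub_ne_zero.2 hne)] at h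
  exact lt_irrefl _ h

end Constants

section Ultrametric

open IsUltrametricDist

variable {G : Type*} [SeminormedAddCommGroup G] [IsUltrametricDist G] {x y : G} {r : ℝ}

theorem norm_add_lt_of_lt (hx : ‖x‖ < r) (hy : ‖y‖ < r) : ‖x + y‖ < r :=
  (norm_add_le_max x y).trans_lt (max_lt hx hy)

theorem norm_sub_lt_of_lt (hx : ‖x‖ < r) (hy : ‖y‖ < r) : ‖x - y‖ < r :=
  sub_eq_add_neg x y ▸ norm_add_lt_of_lt hx ((norm_neg y).trans_lt hy)

theorem norm_sub_le_of_norm_le (hx : ‖x‖ ≤ r) (hy : ‖y‖ ≤ r) : ‖x - y‖ ≤ r :=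
  sub_eq_add_neg x y ▸ (norm_add_le_max x (-y)).trans (max_le hx ((norm_neg y).trans_le hy))

theorem norm_eq_of_norm_sub_lt (h : ‖x - y‖ < ‖x‖) : ‖y‖ = ‖x‖ := by
  rw [← sub_sub_cancel x y, sub_eq_add_neg, norm_add_eq_max_of_norm_ne_norm
    (by rw [norm_neg]; exact h.ne'), norm_neg, max_eq_left h.le]

theorem norm_sum_lt_of_forall_lt {ι : Type*} (s : Finset ι) (g : ι → G) (hr : 0 < r)
    (h : ∀ i ∈ s, ‖g i‖ < r) : ‖∑ i ∈ s, g i‖ < r := by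
  rcases s.eq_empty_or_nonempty with rfl | hs
  · simpa using hr
  · obtain ⟨i, hi, hle⟩ := exists_norm_finsetSum_le_of_nonempty hs g
    exact hle.trans_lt (h i hi)

end Ultrametric

section Conjugates

variable {k Ω : Type*} [Field k] [Field Ω] [Algebra k Ω] [IsAlgClosed Ω]
  [Algebra.IsAlgebraic k Ω] {y z : Ω}

theorem exists_algEquiv_apply_eq_of_aeval_minpoly (h : aeval z (minpoly k y) = 0) :
    ∃ σ : Ω ≃ₐ[k] Ω, σ y = z := by
  have : IsAlgClosure k Ω := ⟨inferInstance, inferInstance⟩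
  have : Normal k Ω := IsAlgClosure.normal k Ω
  have hy : IsIntegral k y := Algebra.IsIntegral.isIntegral y
  exact isConjRoot_iff_exists_algEquiv.1 <| isConjRoot_def.2 <| Eq.symm <|
    minpoly.eq_of_irreducible_of_monic (minpoly.irreducible hy) h (minpoly.monic hy)

theorem exists_algEquiv_apply_eq_of_card_dvd (hsep : (minpoly k y).Separable) {B : Finset Ω}
    (hdvd : B.card ∣ (minpoly k y).natDegree) (hB : ∀ σ : Ω ≃ₐ[k] Ω, σ y ∈ B) (hz : z ∈ B) :
    ∃ σ : Ω ≃ₐ[k] Ω, σ y = z := by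
  classical
  have hconj : ∀ z ∈ ((minpoly k y).aroots Ω).toFinset, ∃ σ : Ω ≃ₐ[k] Ω, σ y = z := fun z hz =>
    exists_algEquiv_apply_eq_of_aeval_minpoly (mem_aroots.1 (Multiset.mem_toFinset.1 hz)).2
  have hcard : ((minpoly k y).aroots Ω).toFinset.card = (minpoly k y).natDegree := by
    rw [Multiset.toFinset_card_of_nodup (nodup_roots hsep.map),
      ← (IsAlgClosed.splits _).natDegree_eq_card_roots, natDegree_map]
  have hsub : ((minpoly k y).aroots Ω).toFinset ⊆ B := fun z hz => by
    obtain ⟨σ, rfl⟩ := hconj z hz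
    exact hB σ
  have hdeg := Nat.le_of_dvd (minpoly.natDegree_pos (Algebra.IsIntegral.isIntegral y)) hdvd
  exact hconj z (Finset.eq_of_subset_of_card_le hsub (hcard ▸ hdeg) ▸ hz)

end Conjugates

section Uniformizer

variable {k Ω : Type*} [NontriviallyNormedField k] [NormedField Ω] [NormedAlgebra k Ω] {ϖ : k}

theorem norm_algEquiv_apply [CompleteSpace k] [IsUltrametricDist k] [Algebra.IsAlgebraic k Ω]
    (σ : Ω ≃ₐ[k] Ω) (y : Ω) : ‖σ y‖ = ‖y‖ := by
  rw [NormedAlgebra.norm_eq_spectralNorm k, NormedAlgebra.norm_eq_spectralNorm k,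
    ← spectralNorm_eq_of_equiv]

theorem IsUniformizer.norm_pos (hϖ : IsUniformizer ϖ) : 0 < ‖ϖ‖ := norm_pos_iff.2 hϖ.ne_zero

theorem IsUniformizer.one_lt_norm_algebraMap_inv (hϖ : IsUniformizer ϖ) :
    1 < ‖algebraMap k Ω ϖ⁻¹‖ := by
  rw [norm_algebraMap', norm_inv]
  exact (one_lt_inv₀ hϖ.norm_pos).2 hϖ.norm_lt_one

theorem IsUniformizer.zpow_injective (hϖ : IsUniformizer ϖ) :
    Function.Injective fun j : ℤ => ‖ϖ‖ ^ j :=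
  zpow_right_injective₀ hϖ.norm_pos hϖ.norm_lt_one.ne

variable [IsAlgClosed Ω]

theorem IsUniformizer.exists_zpow_prod_aroots (hϖ : IsUniformizer ϖ) {P : k[X]} {b : k}
    (hb : P.eval b ≠ 0) :
    ∃ j : ℤ, ((P.aroots Ω).map fun y => ‖algebraMap k Ω b - y‖).prod = ‖ϖ‖ ^ j := by
  have hP : P.leadingCoeff ≠ 0 := leadingCoeff_ne_zero.2 fun h => hb (by simp [h])
  obtain ⟨j, hj⟩ := hϖ.exists_zpow (P.eval b / P.leadingCoeff) (div_ne_zero hb hP)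
  refine ⟨j, hj ▸ ?_⟩
  have heval := (IsAlgClosed.splits (P.map (algebraMap k Ω))).eval_eq_prod_roots
    (algebraMap k Ω b)
  rw [eval_map_algebraMap, aeval_algebraMap_apply, leadingCoeff_map] at heval
  have hnorm := congrArg norm heval
  rw [norm_mul, norm_algebraMap', norm_algebraMap', ← normHom_apply (Multiset.prod _),
    map_multiset_prod, Multiset.map_map] at hnorm
  rw [norm_div, eq_div_iff (norm_ne_zero_iff.2 hP), mul_comm]
  exact hnorm.symm

theorem IsUniformizer.exists_zpow_norm_pow_natDegree [CompleteSpace k] [IsUltrametricDist k]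
    [Algebra.IsAlgebraic k Ω] (hϖ : IsUniformizer ϖ) {y : Ω} (hy : y ≠ 0) :
    ∃ j : ℤ, ‖y‖ ^ (minpoly k y).natDegree = ‖ϖ‖ ^ j := by
  have hy0 : (minpoly k y).eval 0 ≠ 0 := by
    rw [← coeff_zero_eq_eval_zero]
    exact minpoly.coeff_zero_ne_zero (Algebra.IsIntegral.isIntegral y) hy
  obtain ⟨j, hj⟩ := hϖ.exists_zpow_prod_aroots (Ω := Ω) hy0
  refine ⟨j, hj ▸ ?_⟩
  rw [Multiset.map_congr rfl (g := fun _ => ‖y‖) fun z hz => ?_, Multiset.map_const',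
    Multiset.prod_replicate, aroots_def, ← (IsAlgClosed.splits _).natDegree_eq_card_roots,
    natDegree_map]
  obtain ⟨σ, rfl⟩ := exists_algEquiv_apply_eq_of_aeval_minpoly (mem_aroots.1 hz).2
  rw [map_zero, zero_sub, norm_neg, norm_algEquiv_apply]

theorem IsUniformizer.dvd_natDegree_minpoly [CompleteSpace k] [IsUltrametricDist k]
    [Algebra.IsAlgebraic k Ω] (hϖ : IsUniformizer ϖ) {y : Ω} (hy0 : y ≠ 0) {n : ℕ} {m : ℤ}
    (hnm : IsCoprime (n : ℤ) m) (hy : ‖y‖ ^ n = ‖ϖ‖ ^ m) : n ∣ (minpoly k y).natDegree := by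
  obtain ⟨j, hj⟩ := hϖ.exists_zpow_norm_pow_natDegree hy0
  have hexp : j * n = m * (minpoly k y).natDegree := by
    refine hϖ.zpow_injective ?_
    simp only [zpow_mul, zpow_natCast, ← hj, ← hy, ← pow_mul, mul_comm]
  exact Int.natCast_dvd_natCast.1 (hnm.dvd_of_dvd_mul_left (Dvd.intro_left j hexp))

end Uniformizer

/-! ### The fibres of the numerator -/

/-- The data of a `q`-polynomial `f = ∑ j ≤ k, cⱼ Y ^ q ^ j` with `q = p ^ e`, `c₀ ≠ 0`, `cₖ = 1`,
over a field of characteristic `p`, together with an exponent `t < k` such that `cⱼ` vanishes for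
all `0 < j < t` apart from possibly `j = i`. -/
structure CurveData (K : Type*) [Field K] where
  (p e t k i : ℕ)
  c : ℕ → K
  prime : p.Prime
  charP : CharP K p
  e_pos : 0 < e
  two_le_t : 2 ≤ t
  t_lt_k : t < k
  c_zero_ne : c 0 ≠ 0
  c_k : c k = 1
  i_pos : 0 < i
  i_lt_t : i < t
  c_eq_zero (j : ℕ) (hj : 0 < j) (hjt : j < t) (hji : j ≠ i) : c j = 0

theorem sum_eq_of_forall_mem_eq {ι : Type*} {s W : Finset ι} {g : ι → ℝ} {a : ι}
    {r₀ r₁ : ℝ} (hW : W ⊆ s) (ha : a ∈ W) (hga : g a = 0) (h₀ : ∀ y ∈ W, y ≠ a → g y = r₀)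
    (h₁ : ∀ y ∈ s, y ∉ W → g y = r₁) :
    ∑ y ∈ s, g y = (W.card - 1 : ℝ) * r₀ + (s.card - W.card : ℝ) * r₁ := by
  classical
  have hin : ∑ y ∈ W, g y = (W.card - 1 : ℝ) * r₀ := by
    rw [← Finset.sum_erase W hga, Finset.sum_congr rfl fun y hy =>
      h₀ y (Finset.mem_of_mem_erase hy) (Finset.ne_of_mem_erase hy), Finset.sum_const,
      nsmul_eq_mul, Finset.card_erase_of_mem ha, Nat.cast_pred (Finset.card_pos.2 ⟨a, ha⟩)]
  have hout : ∑ y ∈ s \ W, g y = (s.card - W.card : ℝ) * r₁ := by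
    rw [Finset.sum_congr rfl fun y hy => h₁ y (Finset.mem_sdiff.1 hy).1 (Finset.mem_sdiff.1 hy).2,
      Finset.sum_const, nsmul_eq_mul, Finset.card_sdiff_of_subset hW,
      Nat.cast_sub (Finset.card_le_card hW)]
  rw [← Finset.sum_sdiff hW, hin, hout, add_comm]

theorem mul_log_add_mul_log_eq {a b : ℝ} (ha : 0 < a) (hb : 0 < b) {m n m' n' : ℕ}
    (h : a ^ m * b ^ n = b ^ m' * a ^ n') :
    m * Real.log a + n * Real.log b = m' * Real.log b + n' * Real.log a := by
  have hlog := congrArg Real.log h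
  rwa [Real.log_mul (by positivity) (by positivity), Real.log_mul (by positivity) (by positivity),
    Real.log_pow, Real.log_pow, Real.log_pow, Real.log_pow] at hlog

theorem eq_of_pow_mul_pow_eq {a b : ℝ} (ha : 0 < a) (hb : 0 < b) {m n : ℕ} (hmn : m ≠ n)
    (h : a ^ m * b ^ n = b ^ m * a ^ n) : a = b := by
  have hlog := mul_log_add_mul_log_eq ha hb h
  have hprod : ((m : ℝ) - n) * (Real.log a - Real.log b) = 0 := by linarith
  refine Real.log_injOn_pos ha hb (sub_eq_zero.1 ((mul_eq_zero.1 hprod).resolve_left ?_))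
  exact sub_ne_zero.2 (Nat.cast_injective.ne hmn)

namespace CurveData

variable {K : Type*} [Field K] (D : CurveData K)

/-- The size of the field of definition of the linear factors `Y - cX`, `c ^ q = c`. -/
def q : ℕ := D.p ^ D.e

/-- The twisting exponent `q ^ t`. -/
def Q : ℕ := D.q ^ D.t

/-- The ratio of `q ^ k`, the degree of `f`, by `Q`. -/
def R : ℕ := D.q ^ (D.k - D.t)

theorem one_lt_q : 1 < D.q := Nat.one_lt_pow D.e_pos.ne' D.prime.one_lt

theorem q_pos : 0 < D.q := D.one_lt_q.le

theorem one_lt_Q : 1 < D.Q := Nat.one_lt_pow (by have := D.two_le_t; omega) D.one_lt_q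

theorem one_lt_R : 1 < D.R := Nat.one_lt_pow (by have := D.t_lt_k; omega) D.one_lt_q

theorem Q_pos : 0 < D.Q := D.one_lt_Q.le

theorem R_pos : 0 < D.R := D.one_lt_R.le

theorem q_pow_k : D.q ^ D.k = D.Q * D.R := by
  rw [Q, R, ← pow_add, Nat.add_sub_cancel' D.t_lt_k.le]

theorem Q_lt_Q_mul_R : D.Q < D.Q * D.R := lt_mul_of_one_lt_right D.Q_pos D.one_lt_R

theorem charP_of_algebra (A : Type*) [CommRing A] [Nontrivial A] [Algebra K A] : CharP A D.p :=
  have := D.charP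
  charP_of_injective_algebraMap (algebraMap K A).injective D.p

section Additive

variable {A : Type*} [CommRing A] [Algebra K A]

/-- Evaluation of the `q`-polynomial. -/
noncomputable def f (y : A) : A :=
  ∑ j ∈ Finset.range (D.k + 1), algebraMap K A (D.c j) * y ^ D.q ^ j

theorem f_zero : D.f (0 : A) = 0 :=
  Finset.sum_eq_zero fun j _ => by rw [zero_pow (pow_pos D.q_pos j).ne', mul_zero]

theorem map_f {B : Type*} [CommRing B] [Algebra K B] (φ : A →ₐ[K] B) (y : A) :
    φ (D.f y) = D.f (φ y) := by
  simp [f]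

variable [Nontrivial A]

theorem natCast_q_eq_zero : (D.q : A) = 0 := by
  have := D.charP_of_algebra A
  rw [CharP.cast_eq_zero_iff A D.p]
  exact dvd_pow_self _ D.e_pos.ne'

theorem sub_pow_q_pow (j : ℕ) (x y : A) : (x - y) ^ D.q ^ j = x ^ D.q ^ j - y ^ D.q ^ j := by
  have := D.charP_of_algebra A
  have := Fact.mk D.prime
  rw [q, ← pow_mul]
  exact sub_pow_char_pow x y _

theorem add_pow_q_pow (j : ℕ) (x y : A) : (x + y) ^ D.q ^ j = x ^ D.q ^ j + y ^ D.q ^ j := by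
  have := D.charP_of_algebra A
  have := Fact.mk D.prime
  rw [q, ← pow_mul]
  exact add_pow_char_pow x y _ _

theorem f_sub (x y : A) : D.f (x - y) = D.f x - D.f y := by
  simp only [f, D.sub_pow_q_pow, mul_sub, Finset.sum_sub_distrib]

end Additive

section Norm

variable {Ω : Type*} [NormedField Ω] [IsUltrametricDist Ω] [Algebra K Ω] [IsTrivialNormOn K Ω]
  {y : Ω}

theorem norm_f_sub_lt_of_norm_lt_one (hy : y ≠ 0) (h : ‖y‖ < 1) :
    ‖D.f y - algebraMap K Ω (D.c 0) * y‖ < ‖y‖ := by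
  have hpos := norm_pos_iff.2 hy
  rw [f, Finset.sum_range_succ', pow_zero, pow_one, add_sub_cancel_right]
  refine norm_sum_lt_of_forall_lt _ _ hpos fun j _ => (norm_algebraMap_mul_le _ _).trans_lt ?_
  rw [norm_pow]
  exact pow_lt_self_of_lt_one₀ hpos h (Nat.one_lt_pow j.succ_ne_zero D.one_lt_q)

theorem norm_f_of_norm_lt_one (h : ‖y‖ < 1) : ‖D.f y‖ = ‖y‖ := by
  rcases eq_or_ne y 0 with rfl | hy
  · rw [D.f_zero]
  have hc : ‖algebraMap K Ω (D.c 0) * y‖ = ‖y‖ := by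
    rw [norm_mul, norm_algebraMap_eq_one D.c_zero_ne, one_mul]
  rw [← hc]
  refine norm_eq_of_norm_sub_lt ?_
  rw [norm_sub_rev, hc]
  exact D.norm_f_sub_lt_of_norm_lt_one hy h

theorem norm_f_sub_pow_lt {x : Ω} (hx : 1 < ‖x‖) (hy : ‖y‖ ≤ ‖x‖) :
    ‖D.f y - y ^ D.q ^ D.k‖ < ‖x‖ ^ D.q ^ D.k := by
  rw [f, Finset.sum_range_succ, D.c_k, map_one, one_mul, add_sub_cancel_right]
  refine norm_sum_lt_of_forall_lt _ _ (by positivity) fun j hj =>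
    (norm_algebraMap_mul_le _ _).trans_lt ?_
  rw [norm_pow]
  calc ‖y‖ ^ D.q ^ j ≤ ‖x‖ ^ D.q ^ j := pow_le_pow_left₀ (norm_nonneg y) hy _
    _ < ‖x‖ ^ D.q ^ D.k :=
      pow_lt_pow_right₀ hx (Nat.pow_lt_pow_right D.one_lt_q (Finset.mem_range.1 hj))

theorem norm_f_of_one_lt_norm (h : 1 < ‖y‖) : ‖D.f y‖ = ‖y‖ ^ (D.Q * D.R) := by
  rw [← D.q_pow_k, ← norm_pow]
  refine norm_eq_of_norm_sub_lt ?_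
  rw [norm_sub_rev, norm_pow]
  exact D.norm_f_sub_pow_lt h le_rfl

theorem norm_f_le_one (h : ‖y‖ ≤ 1) : ‖D.f y‖ ≤ 1 := by
  refine IsUltrametricDist.norm_sum_le_of_forall_le_of_nonneg zero_le_one fun j _ =>
    (norm_algebraMap_mul_le _ _).trans ?_
  rw [norm_pow]
  exact pow_le_one₀ (norm_nonneg y) h

end Norm

section Polynomial

variable {A : Type*} [CommRing A] [Algebra K A]

/-- The specialisation at `X = x` of the numerator `f(X) Y ^ Q - f(Y) X ^ Q` of the equation of the
curve. -/
noncomputable def H (x : A) : A[X] := C (D.f x) * X ^ D.Q - D.f X * C (x ^ D.Q)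

theorem map_H {B : Type*} [CommRing B] [Algebra K B] (φ : A →ₐ[K] B) (x : A) :
    (D.H x).map (φ : A →+* B) = D.H (φ x) := by
  have hX : (D.f (X : A[X])).map (φ : A →+* B) = D.f X := by
    simpa using D.map_f (mapAlgHom φ) X
  simp [H, hX, ← D.map_f φ]

theorem eval_f_X (y : A) : (D.f (X : A[X])).eval y = D.f y := by
  simp [f, eval_finsetSum, Polynomial.algebraMap_apply]

theorem eval_H (x y : A) : (D.H x).eval y = D.f x * y ^ D.Q - D.f y * x ^ D.Q := by
  simp [H, D.eval_f_X]

theorem f_X_eq : D.f (X : A[X]) = X ^ (D.Q * D.R) +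
    ∑ j ∈ Finset.range D.k, C (algebraMap K A (D.c j)) * X ^ D.q ^ j := by
  rw [f, Finset.sum_range_succ, D.c_k, map_one, one_mul, D.q_pow_k, add_comm]
  simp only [Polynomial.algebraMap_apply]

theorem degree_f_X_tail_lt :
    (∑ j ∈ Finset.range D.k, C (algebraMap K A (D.c j)) * X ^ D.q ^ j).degree
      < ((D.Q * D.R : ℕ) : WithBot ℕ) := by
  refine (degree_sum_le _ _).trans_lt ((Finset.sup_lt_iff (WithBot.bot_lt_coe _)).2 fun j hj => ?_)
  refine (degree_C_mul_X_pow_le _ _).trans_lt (Nat.cast_lt.2 ?_)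
  exact D.q_pow_k ▸ Nat.pow_lt_pow_right D.one_lt_q (Finset.mem_range.1 hj)

theorem monic_f_X : (D.f (X : A[X])).Monic := by
  rw [D.f_X_eq]
  exact monic_X_pow_add D.degree_f_X_tail_lt

variable [Nontrivial A]

theorem natDegree_f_X : (D.f (X : A[X])).natDegree = D.Q * D.R := by
  rw [D.f_X_eq, natDegree_add_eq_left_of_degree_lt, natDegree_X_pow]
  rw [degree_X_pow]
  exact D.degree_f_X_tail_lt

theorem derivative_f_X : derivative (D.f (X : A[X])) = C (algebraMap K A (D.c 0)) := by
  rw [f, Finset.sum_range_succ', derivative_add, derivative_sum, Finset.sum_eq_zero fun j _ => ?_]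
  · simp [Polynomial.algebraMap_apply]
  · rw [Polynomial.algebraMap_apply, derivative_C_mul_X_pow, Nat.cast_pow, D.natCast_q_eq_zero,
      zero_pow j.succ_ne_zero, mul_zero, C_0, zero_mul]

theorem derivative_H (x : A) : derivative (D.H x) = C (-(algebraMap K A (D.c 0) * x ^ D.Q)) := by
  have ht : D.t ≠ 0 := by have := D.two_le_t; omega
  rw [H, derivative_sub, derivative_C_mul_X_pow, derivative_mul, derivative_C, D.derivative_f_X, Q,
    Nat.cast_pow, D.natCast_q_eq_zero, zero_pow ht]
  simp

end Polynomial

section Degree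

variable {A : Type*} [CommRing A] [IsDomain A] [Algebra K A] {x : A}

theorem degree_C_mul_X_pow_Q_lt (hx : x ≠ 0) :
    (C (D.f x) * X ^ D.Q).degree < (D.f X * C (x ^ D.Q)).degree := by
  rw [degree_mul_C (pow_ne_zero _ hx), degree_eq_natDegree D.monic_f_X.ne_zero, D.natDegree_f_X]
  exact (degree_C_mul_X_pow_le _ _).trans_lt (Nat.cast_lt.2 D.Q_lt_Q_mul_R)

theorem leadingCoeff_H (hx : x ≠ 0) : (D.H x).leadingCoeff = -x ^ D.Q := by
  rw [H, leadingCoeff_sub_of_degree_lt' (D.degree_C_mul_X_pow_Q_lt hx), leadingCoeff_mul,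
    D.monic_f_X.leadingCoeff, leadingCoeff_C, one_mul]

theorem natDegree_H (hx : x ≠ 0) : (D.H x).natDegree = D.Q * D.R := by
  rw [H, natDegree_eq_of_degree_eq (degree_sub_eq_right_of_degree_lt
    (D.degree_C_mul_X_pow_Q_lt hx)), natDegree_mul_C (pow_ne_zero _ hx), D.natDegree_f_X]

theorem H_ne_zero (hx : x ≠ 0) : D.H x ≠ 0 :=
  leadingCoeff_ne_zero.1 <| D.leadingCoeff_H hx ▸ neg_ne_zero.2 (pow_ne_zero _ hx)

end Degree

section Roots

variable {L : Type*} [Field L] [Algebra K L] {x : L}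

theorem separable_H (hx : x ≠ 0) : (D.H x).Separable := by
  rw [separable_def, D.derivative_H]
  refine isCoprime_one_right.of_isCoprime_of_dvd_right (isUnit_iff_dvd_one.1 (isUnit_C.2 ?_))
  simpa [hx] using D.c_zero_ne

theorem coeff_one_H : (D.H x).coeff 1 = -(algebraMap K L (D.c 0) * x ^ D.Q) := by
  have h := congrArg (coeff · 0) (D.derivative_H x)
  simpa [coeff_derivative, -map_mul, -map_neg] using h

theorem exists_X_mul_eq_H (hx : x ≠ 0) : ∃ P : L[X], D.H x = X * P ∧
    P.coeff 0 = -(algebraMap K L (D.c 0) * x ^ D.Q) ∧ P.leadingCoeff = -x ^ D.Q := by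
  have h0 : (D.H x).coeff 0 = 0 := by
    rw [coeff_zero_eq_eval_zero, D.eval_H, D.f_zero, zero_pow D.Q_pos.ne', zero_mul, mul_zero,
      sub_zero]
  obtain ⟨P, hP⟩ := X_dvd_iff.2 h0
  refine ⟨P, hP, ?_, ?_⟩
  · rw [← D.coeff_one_H, hP, coeff_X_mul]
  · rw [← D.leadingCoeff_H hx, hP, leadingCoeff_mul, leadingCoeff_X, one_mul]

open Classical in
/-- The fibre of the numerator over `X = x`, a vector space over the field with `q` elements. -/
noncomputable def V (x : L) : Finset L := (D.H x).roots.toFinset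

theorem mem_V (hx : x ≠ 0) {y : L} : y ∈ D.V x ↔ D.f y * x ^ D.Q = D.f x * y ^ D.Q := by
  classical
  rw [V, Multiset.mem_toFinset, mem_roots (D.H_ne_zero hx), IsRoot.def, D.eval_H, sub_eq_zero,
    eq_comm]

theorem zero_mem_V (hx : x ≠ 0) : 0 ∈ D.V x := by
  rw [D.mem_V hx, D.f_zero, zero_pow D.Q_pos.ne', zero_mul, mul_zero]

theorem sub_mem_V (hx : x ≠ 0) {y z : L} (hy : y ∈ D.V x) (hz : z ∈ D.V x) : y - z ∈ D.V x := by
  rw [D.mem_V hx] at *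
  rw [D.f_sub, Q, D.sub_pow_q_pow, ← Q, sub_mul, hy, hz, mul_sub]

variable [IsAlgClosed L]

theorem card_V (hx : x ≠ 0) : (D.V x).card = D.Q * D.R := by
  classical
  rw [V, Multiset.toFinset_card_of_nodup (nodup_roots (D.separable_H hx)),
    ← (IsAlgClosed.splits _).natDegree_eq_card_roots, D.natDegree_H hx]

end Roots

section Fibre

variable {Ω : Type*} [NormedField Ω] [Algebra K Ω] [IsTrivialNormOn K Ω] [IsAlgClosed Ω] {x y : Ω}

open Classical in
theorem prod_norm_erase_zero_V (hx : x ≠ 0) : ∏ y ∈ (D.V x).erase 0, ‖y‖ = 1 := by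
  obtain ⟨P, hP, hcoeff, hlead⟩ := D.exists_X_mul_eq_H hx
  have hroots : (D.H x).roots = 0 ::ₘ P.roots := by
    rw [hP, roots_mul (hP ▸ D.H_ne_zero hx), roots_X, Multiset.singleton_add]
  have hnodup : (0 ::ₘ P.roots).Nodup := hroots ▸ nodup_roots (D.separable_H hx)
  have hV : ((D.V x).erase 0).val = P.roots := by
    rw [Finset.erase_val, V, Multiset.toFinset_val, hroots, hnodup.dedup,
      Multiset.erase_cons_head]
  have heval := congrArg norm ((IsAlgClosed.splits P).eval_eq_prod_roots 0)
  rw [← coeff_zero_eq_eval_zero, hcoeff, hlead, norm_neg, norm_mul,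
    norm_algebraMap_eq_one D.c_zero_ne, one_mul, norm_mul, norm_neg,
    left_eq_mul₀ (norm_ne_zero_iff.2 (pow_ne_zero _ hx)), ← normHom_apply (Multiset.prod _),
    map_multiset_prod, Multiset.map_map] at heval
  rw [Finset.prod, hV, ← heval]
  simp

theorem sum_log_norm_V (hx : x ≠ 0) : ∑ y ∈ D.V x, Real.log ‖y‖ = 0 := by
  classical
  rw [← Finset.sum_erase (a := 0) _ (by simp), ← Real.log_prod fun y hy =>
    norm_ne_zero_iff.2 (Finset.ne_of_mem_erase hy), D.prod_norm_erase_zero_V hx, Real.log_one]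

end Fibre

section Dichotomy

variable {K : Type*} [Field K] (D : CurveData K) {Ω : Type*} [NormedField Ω] [Algebra K Ω]
  {x y z : Ω}

theorem norm_f_mul_norm_pow_Q (hx0 : x ≠ 0) (hy : y ∈ D.V x) :
    ‖D.f y‖ * ‖x‖ ^ D.Q = ‖D.f x‖ * ‖y‖ ^ D.Q := by
  rw [← norm_pow, ← norm_pow, ← norm_mul, ← norm_mul, (D.mem_V hx0).1 hy]

/-- The points of the fibre in the closed ball of radius `‖x‖`. -/
noncomputable def closedPart (x : Ω) : Finset Ω := {y ∈ D.V x | ‖y‖ ≤ ‖x‖}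

/-- The points of the fibre in the open ball of radius `‖x‖`. -/
noncomputable def openPart (x : Ω) : Finset Ω := {y ∈ D.V x | ‖y‖ < ‖x‖}

theorem closedPart_subset_V (x : Ω) : D.closedPart x ⊆ D.V x := Finset.filter_subset _ _

theorem openPart_subset_V (x : Ω) : D.openPart x ⊆ D.V x := Finset.filter_subset _ _

variable {D}

theorem mem_closedPart : y ∈ D.closedPart x ↔ y ∈ D.V x ∧ ‖y‖ ≤ ‖x‖ := Finset.mem_filter

theorem mem_openPart : y ∈ D.openPart x ↔ y ∈ D.V x ∧ ‖y‖ < ‖x‖ := Finset.mem_filter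

variable (D)

theorem zero_mem_closedPart (hx0 : x ≠ 0) : 0 ∈ D.closedPart x :=
  mem_closedPart.2 ⟨D.zero_mem_V hx0, norm_zero.trans_le (norm_nonneg x)⟩

theorem zero_mem_openPart (hx0 : x ≠ 0) : 0 ∈ D.openPart x :=
  mem_openPart.2 ⟨D.zero_mem_V hx0, norm_zero.trans_lt (norm_pos_iff.2 hx0)⟩

theorem ne_zero_of_notMem_closedPart (hx0 : x ≠ 0) (hy : y ∉ D.closedPart x) : y ≠ 0 :=
  fun h => hy (h ▸ D.zero_mem_closedPart hx0)

variable [IsUltrametricDist Ω]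

theorem sub_mem_closedPart (hx0 : x ≠ 0) (hy : y ∈ D.closedPart x) (hz : z ∈ D.closedPart x) :
    y - z ∈ D.closedPart x := by
  rw [mem_closedPart] at *
  exact ⟨D.sub_mem_V hx0 hy.1 hz.1,
    sub_eq_add_neg y z ▸ (IsUltrametricDist.norm_add_le_max y (-z)).trans
      (max_le hy.2 ((norm_neg z).trans_le hz.2))⟩

theorem sub_mem_openPart (hx0 : x ≠ 0) (hy : y ∈ D.openPart x) (hz : z ∈ D.openPart x) :
    y - z ∈ D.openPart x := by
  rw [mem_openPart] at *
  exact ⟨D.sub_mem_V hx0 hy.1 hz.1, norm_sub_lt_of_lt hy.2 hz.2⟩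

variable [IsTrivialNormOn K Ω]

section Zero

variable (hx0 : x ≠ 0) (hx : ‖x‖ < 1)
include hx0 hx

theorem norm_eq_of_norm_lt_one (hy : y ∈ D.V x) (hy0 : y ≠ 0) (hy1 : ‖y‖ ≤ 1) :
    ‖y‖ = ‖x‖ := by
  have h := D.norm_f_mul_norm_pow_Q hx0 hy
  rw [D.norm_f_of_norm_lt_one hx] at h
  rcases hy1.lt_or_eq with hlt | heq
  · rw [D.norm_f_of_norm_lt_one hlt] at h
    refine eq_of_pow_mul_pow_eq (norm_pos_iff.2 hy0) (norm_pos_iff.2 hx0) D.one_lt_Q.ne ?_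
    rwa [pow_one, pow_one]
  · have hsmall : ‖x‖ ^ D.Q < ‖x‖ :=
      pow_lt_self_of_lt_one₀ (norm_pos_iff.2 hx0) hx D.one_lt_Q
    have hfy := mul_le_of_le_one_left (pow_nonneg (norm_nonneg x) D.Q) (D.norm_f_le_one hy1)
    rw [heq, one_pow, mul_one] at h
    exact absurd (h.symm.trans_le hfy) hsmall.not_ge

theorem one_lt_norm_of_notMem_closedPart (hy : y ∈ D.V x) (hyW : y ∉ D.closedPart x) :
    1 < ‖y‖ := by
  by_contra! h
  exact hyW (mem_closedPart.2 ⟨hy, (D.norm_eq_of_norm_lt_one hx0 hx hy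
    (D.ne_zero_of_notMem_closedPart hx0 hyW) h).le⟩)

theorem norm_eq_of_mem_closedPart (hy : y ∈ D.closedPart x) (hy0 : y ≠ 0) : ‖y‖ = ‖x‖ :=
  have h := mem_closedPart.1 hy
  D.norm_eq_of_norm_lt_one hx0 hx h.1 hy0 (h.2.trans hx.le)

theorem log_norm_of_notMem_closedPart (hy : y ∈ D.V x) (hyW : y ∉ D.closedPart x) :
    Real.log ‖y‖ = -((D.Q - 1) / (D.Q * (D.R - 1))) * Real.log ‖x‖ := by
  have h := D.norm_f_mul_norm_pow_Q hx0 hy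
  rw [D.norm_f_of_norm_lt_one hx, D.norm_f_of_one_lt_norm
    (D.one_lt_norm_of_notMem_closedPart hx0 hx hy hyW), ← pow_one ‖x‖, ← pow_mul, one_mul] at h
  have hlog := mul_log_add_mul_log_eq
    (norm_pos_iff.2 (D.ne_zero_of_notMem_closedPart hx0 hyW)) (norm_pos_iff.2 hx0) h
  have hQ : (D.Q : ℝ) ≠ 0 := Nat.cast_ne_zero.2 D.Q_pos.ne'
  have hR : (D.R - 1 : ℝ) ≠ 0 := sub_ne_zero.2 (Nat.cast_ne_one.2 D.one_lt_R.ne')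
  push_cast at hlog
  field_simp
  linear_combination hlog

theorem card_closedPart [IsAlgClosed Ω] : (D.closedPart x).card = D.Q := by
  have hsum := sum_eq_of_forall_mem_eq (g := fun y => Real.log ‖y‖) (D.closedPart_subset_V x)
    (D.zero_mem_closedPart hx0) (by simp)
    (fun y hy hy0 => congrArg Real.log (D.norm_eq_of_mem_closedPart hx0 hx hy hy0))
    fun y hy hyW => D.log_norm_of_notMem_closedPart hx0 hx hy hyW
  rw [D.sum_log_norm_V hx0, D.card_V hx0] at hsum
  have hlog : Real.log ‖x‖ ≠ 0 := (Real.log_neg (norm_pos_iff.2 hx0) hx).ne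
  have hQ : (0 : ℝ) < D.Q := Nat.cast_pos.2 D.Q_pos
  have hR : (1 : ℝ) < D.R := Nat.one_lt_cast.2 D.one_lt_R
  have hR0 : (D.R - 1 : ℝ) ≠ 0 := (sub_pos.2 hR).ne'
  have hQR : (D.Q * D.R - 1 : ℝ) ≠ 0 := by
    rw [← Nat.cast_mul]
    exact sub_ne_zero.2 (Nat.cast_ne_one.2 (D.one_lt_Q.trans D.Q_lt_Q_mul_R).ne')
  push_cast at hsum
  field_simp at hsum
  have hprod : ((D.closedPart x).card - D.Q : ℝ) * (D.Q * D.R - 1) = 0 := by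
    refine mul_left_cancel₀ hlog ?_
    linear_combination -hsum
  exact_mod_cast sub_eq_zero.1 ((mul_eq_zero.1 hprod).resolve_right hQR)

end Zero

section Infinity

variable (hx : 1 < ‖x‖)
include hx

theorem norm_eq_of_one_le_norm (hy : y ∈ D.V x) (hy1 : 1 ≤ ‖y‖) : ‖y‖ = ‖x‖ := by
  have hx0 : x ≠ 0 := norm_pos_iff.1 (one_pos.trans hx)
  have h := D.norm_f_mul_norm_pow_Q hx0 hy
  rw [D.norm_f_of_one_lt_norm hx] at h
  rcases hy1.lt_or_eq' with hlt | heq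
  · refine eq_of_pow_mul_pow_eq (one_pos.trans hlt) (one_pos.trans hx) D.Q_lt_Q_mul_R.ne' ?_
    rwa [← D.norm_f_of_one_lt_norm hlt]
  · have hlarge : ‖x‖ ^ D.Q < ‖x‖ ^ (D.Q * D.R) := pow_lt_pow_right₀ hx D.Q_lt_Q_mul_R
    have hfy := mul_le_of_le_one_left (pow_nonneg (norm_nonneg x) D.Q) (D.norm_f_le_one heq.le)
    rw [heq, one_pow, mul_one] at h
    exact absurd (h.symm.trans_le hfy) hlarge.not_ge

theorem norm_lt_one_of_mem_openPart (hy : y ∈ D.openPart x) : ‖y‖ < 1 := by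
  by_contra! h
  have hmem := mem_openPart.1 hy
  exact hmem.2.ne (D.norm_eq_of_one_le_norm hx hmem.1 h)

theorem norm_eq_of_notMem_openPart (hy : y ∈ D.V x) (hyW : y ∉ D.openPart x) : ‖y‖ = ‖x‖ := by
  refine D.norm_eq_of_one_le_norm hx hy (hx.le.trans ?_)
  by_contra! h
  exact hyW (mem_openPart.2 ⟨hy, h⟩)

theorem norm_le_of_mem_V (hy : y ∈ D.V x) : ‖y‖ ≤ ‖x‖ := by
  by_contra! h
  exact h.ne' (D.norm_eq_of_one_le_norm hx hy (hx.trans h).le)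

theorem log_norm_of_mem_openPart (hy : y ∈ D.openPart x) (hy0 : y ≠ 0) :
    Real.log ‖y‖ = -(D.Q * (D.R - 1) / (D.Q - 1)) * Real.log ‖x‖ := by
  have hx0 : x ≠ 0 := norm_pos_iff.1 (one_pos.trans hx)
  have h := D.norm_f_mul_norm_pow_Q hx0 (mem_openPart.1 hy).1
  rw [D.norm_f_of_one_lt_norm hx, D.norm_f_of_norm_lt_one
    (D.norm_lt_one_of_mem_openPart hx hy), ← pow_one ‖y‖, ← pow_mul, one_mul] at h
  have hlog := mul_log_add_mul_log_eq (norm_pos_iff.2 hy0) (one_pos.trans hx) h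
  have hQ : (D.Q - 1 : ℝ) ≠ 0 := sub_ne_zero.2 (Nat.cast_ne_one.2 D.one_lt_Q.ne')
  push_cast at hlog
  field_simp
  linear_combination -hlog

theorem card_openPart [IsAlgClosed Ω] : (D.openPart x).card = D.Q := by
  have hx0 : x ≠ 0 := norm_pos_iff.1 (one_pos.trans hx)
  have hsum := sum_eq_of_forall_mem_eq (g := fun y => Real.log ‖y‖) (D.openPart_subset_V x)
    (D.zero_mem_openPart hx0) (by simp)
    (fun y hy hy0 => D.log_norm_of_mem_openPart hx hy hy0)
    fun y hy hyW => congrArg Real.log (D.norm_eq_of_notMem_openPart hx hy hyW)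
  rw [D.sum_log_norm_V hx0, D.card_V hx0] at hsum
  have hlog : Real.log ‖x‖ ≠ 0 := (Real.log_pos hx).ne'
  have hQ : (D.Q - 1 : ℝ) ≠ 0 := sub_ne_zero.2 (Nat.cast_ne_one.2 D.one_lt_Q.ne')
  have hQR : (D.Q * D.R - 1 : ℝ) ≠ 0 := by
    rw [← Nat.cast_mul]
    exact sub_ne_zero.2 (Nat.cast_ne_one.2 (D.one_lt_Q.trans D.Q_lt_Q_mul_R).ne')
  push_cast at hsum
  field_simp at hsum
  have hprod : ((D.openPart x).card - D.Q : ℝ) * (D.Q * D.R - 1) = 0 := by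
    refine mul_left_cancel₀ hlog ?_
    linear_combination hsum
  exact_mod_cast sub_eq_zero.1 ((mul_eq_zero.1 hprod).resolve_right hQR)

end Infinity

end Dichotomy

end CurveData

/-! ### Factors at the place above zero -/

section Zeros

variable {k Ω : Type*} [Field k] [Field Ω] [Algebra k Ω] {P : k[X]} {y : Ω}

open Classical in
/-- The zeros of `P` in `Ω`, as a finite set; this is `Polynomial.rootSet` as a `Finset`. -/
noncomputable def zeros (P : k[X]) (Ω : Type*) [Field Ω] [Algebra k Ω] : Finset Ω :=
  (P.aroots Ω).toFinset

theorem mem_zeros (hP : P ≠ 0) : y ∈ zeros P Ω ↔ aeval y P = 0 := by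
  classical
  rw [zeros, Multiset.mem_toFinset, mem_aroots, and_iff_right hP]

theorem aeval_eq_zero_of_mem_zeros (hy : y ∈ zeros P Ω) : aeval y P = 0 := by
  classical
  exact (mem_aroots.1 (Multiset.mem_toFinset.1 hy)).2

open Classical in
theorem zeros_mul {P' : k[X]} (h : P * P' ≠ 0) :
    zeros (P * P') Ω = zeros P Ω ∪ zeros P' Ω := by
  rw [zeros, aroots_mul h, Multiset.toFinset_add, zeros, zeros]

theorem disjoint_zeros_of_isCoprime {P' : k[X]} (h : IsCoprime P P') :
    Disjoint (zeros P Ω) (zeros P' Ω) := by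
  refine Finset.disjoint_left.2 fun y hy hy' => ?_
  obtain ⟨a, b, hab⟩ := h
  simpa [aeval_eq_zero_of_mem_zeros hy, aeval_eq_zero_of_mem_zeros hy'] using
    congrArg (aeval y) hab

open Classical in
theorem card_zeros_mul_inter {P' : k[X]} (h : (P * P').Separable) (W : Finset Ω) :
    (zeros (P * P') Ω ∩ W).card = (zeros P Ω ∩ W).card + (zeros P' Ω ∩ W).card := by
  rw [zeros_mul h.ne_zero, Finset.union_inter_distrib_right, Finset.card_union_of_disjoint]
  exact (disjoint_zeros_of_isCoprime h.isCoprime).mono Finset.inter_subset_left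
    Finset.inter_subset_left

theorem card_zeros [IsAlgClosed Ω] (h : P.Separable) : (zeros P Ω).card = P.natDegree := by
  classical
  rw [zeros, Multiset.toFinset_card_of_nodup (nodup_roots h.map),
    ← (IsAlgClosed.splits _).natDegree_eq_card_roots, natDegree_map]

theorem prod_zeros {M : Type*} [CommMonoid M] (h : P.Separable) (g : Ω → M) :
    ∏ y ∈ zeros P Ω, g y = ((P.aroots Ω).map g).prod := by
  classical
  rw [Finset.prod, zeros, Multiset.toFinset_val, (nodup_roots h.map).dedup]

theorem algEquiv_apply_mem_zeros (σ : Ω ≃ₐ[k] Ω) (hy : y ∈ zeros P Ω) : σ y ∈ zeros P Ω := by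
  have hP : P ≠ 0 := fun h => by simp [zeros, h] at hy
  rw [mem_zeros hP] at *
  rw [← AlgEquiv.coe_toAlgHom, aeval_algHom_apply, hy, map_zero]

theorem algEquiv_apply_algebraMap_of_tower {K : Type*} [CommSemiring K] [Algebra K k] [Algebra K Ω]
    [IsScalarTower K k Ω] (σ : Ω ≃ₐ[k] Ω) (c : K) : σ (algebraMap K Ω c) = algebraMap K Ω c := by
  rw [IsScalarTower.algebraMap_apply K k Ω, σ.commutes]

end Zeros

namespace CurveData

section Factor

variable {K : Type*} [Field K] (D : CurveData K) {k Ω : Type*} [Field k] [Field Ω] [Algebra K k]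
  [Algebra k Ω] {P : k[X]} {x : k} {y : Ω}

theorem separable_minpoly (hx : x ≠ 0) (hP : P ∣ D.H x) (hy : y ∈ zeros P Ω) :
    (minpoly k y).Separable :=
  (D.separable_H hx).of_dvd ((minpoly.dvd k y (aeval_eq_zero_of_mem_zeros hy)).trans hP)

/-- A set of conjugates of a zero of a factor `P` of the equation, as large as the degree allows,
consists of zeros of `P`. -/
theorem subset_zeros_of_card_dvd [IsAlgClosed Ω] [Algebra.IsAlgebraic k Ω] (hx : x ≠ 0)
    (hP : P ∣ D.H x) (hy : y ∈ zeros P Ω) {B : Finset Ω}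
    (hdvd : B.card ∣ (minpoly k y).natDegree) (hB : ∀ σ : Ω ≃ₐ[k] Ω, σ y ∈ B) :
    B ⊆ zeros P Ω := by
  intro z hz
  obtain ⟨σ, rfl⟩ :=
    exists_algEquiv_apply_eq_of_card_dvd (D.separable_minpoly hx hP hy) hdvd hB hz
  exact algEquiv_apply_mem_zeros σ hy

variable [Algebra K Ω] [IsScalarTower K k Ω]

theorem map_algebraMap_H (x : k) : (D.H x).map (algebraMap k Ω) = D.H (algebraMap k Ω x) :=
  D.map_H (IsScalarTower.toAlgHom K k Ω) x

theorem zeros_subset_V (hx : x ≠ 0) (hP : P ∣ D.H x) : zeros P Ω ⊆ D.V (algebraMap k Ω x) := by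
  classical
  intro y hy
  have hx' : algebraMap k Ω x ≠ 0 := by simpa using hx
  rw [V, Multiset.mem_toFinset, mem_roots (D.H_ne_zero hx'), IsRoot.def, ← D.map_algebraMap_H,
    eval_map_algebraMap]
  exact aeval_eq_zero_of_dvd_aeval_eq_zero hP (aeval_eq_zero_of_mem_zeros hy)

end Factor

section UnitIdentity

variable {K : Type*} [Field K] (D : CurveData K) {L : Type*} [Field L] {τ y : L}

theorem unit_pow_R : (y ^ D.Q * τ ^ (D.Q - 1)) ^ D.R =
    y ^ (D.Q * D.R) * ((τ ^ (D.R - 1)) ^ (D.Q - 1) * τ ^ (D.Q - 1)) := by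
  obtain ⟨R', hR'⟩ : ∃ R', D.R = R' + 1 := ⟨D.R - 1, (Nat.sub_add_cancel D.R_pos).symm⟩
  rw [hR', Nat.add_sub_cancel]
  ring

/-- Dividing the equation of the curve by `X = τ ^ (R - 1)` and keeping its leading terms shows that
`η = y ^ Q τ ^ (Q - 1)` is nearly a root of `η ^ R = c₀ η`. -/
theorem unit_pow_R_sub_eq [Algebra K L] (hτ0 : τ ≠ 0) (hy : y ∈ D.V (τ ^ (D.R - 1))) :
    (y ^ D.Q * τ ^ (D.Q - 1)) ^ D.R - algebraMap K L (D.c 0) * (y ^ D.Q * τ ^ (D.Q - 1)) =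
      y ^ D.Q * τ ^ (D.Q - 1) *
          ((D.f (τ ^ (D.R - 1)) - algebraMap K L (D.c 0) * τ ^ (D.R - 1)) / τ ^ (D.R - 1)) -
        (D.f y - y ^ (D.Q * D.R)) * ((τ ^ (D.R - 1)) ^ (D.Q - 1) * τ ^ (D.Q - 1)) := by
  have hX0 := pow_ne_zero (D.R - 1) hτ0
  have hmem := (D.mem_V hX0).1 hy
  rw [D.unit_pow_R]
  generalize τ ^ (D.R - 1) = x at *
  obtain ⟨Q', hQ'⟩ : ∃ Q', D.Q = Q' + 1 := ⟨D.Q - 1, (Nat.sub_add_cancel D.Q_pos).symm⟩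
  rw [hQ'] at hmem
  rw [hQ', Nat.add_sub_cancel]
  field_simp
  linear_combination hmem

end UnitIdentity

section ZeroPlace

variable {K : Type*} [Field K] (D : CurveData K) {Ω : Type*} [NormedField Ω] {τ y : Ω}

theorem norm_pow_R_sub_one_lt_one (hτ : ‖τ‖ < 1) : ‖τ ^ (D.R - 1)‖ < 1 := by
  rw [norm_pow]
  exact pow_lt_one₀ (norm_nonneg τ) hτ (Nat.sub_ne_zero_of_lt D.one_lt_R)

variable [IsUltrametricDist Ω] [Algebra K Ω] [IsTrivialNormOn K Ω]

section Residue

variable (hτ0 : τ ≠ 0) (hτ : ‖τ‖ < 1)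
include hτ0 hτ

theorem norm_pow_Q_mul_norm_pow_eq_one (hy : y ∈ D.V (τ ^ (D.R - 1)))
    (hyW : y ∉ D.closedPart (τ ^ (D.R - 1))) : ‖y‖ ^ D.Q * ‖τ‖ ^ (D.Q - 1) = 1 := by
  have hX0 := pow_ne_zero (D.R - 1) hτ0
  have hy0 := norm_pos_iff.2 (D.ne_zero_of_notMem_closedPart hX0 hyW)
  have := norm_pos_iff.2 hτ0
  have hlog := D.log_norm_of_notMem_closedPart hX0 (D.norm_pow_R_sub_one_lt_one hτ) hy hyW
  have hQ : (D.Q : ℝ) ≠ 0 := Nat.cast_ne_zero.2 D.Q_pos.ne'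
  have hR : (D.R - 1 : ℝ) ≠ 0 := sub_ne_zero.2 (Nat.cast_ne_one.2 D.one_lt_R.ne')
  rw [norm_pow, Real.log_pow, Nat.cast_sub D.R_pos, Nat.cast_one] at hlog
  refine Real.log_injOn_pos (Set.mem_Ioi.2 (by positivity)) (Set.mem_Ioi.2 one_pos) ?_
  rw [Real.log_one, Real.log_mul (by positivity) (by positivity), Real.log_pow, Real.log_pow,
    hlog, Nat.cast_sub D.Q_pos, Nat.cast_one]
  field_simp
  ring

theorem norm_unit_pow_R_sub_lt_one (hy : y ∈ D.V (τ ^ (D.R - 1)))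
    (hyW : y ∉ D.closedPart (τ ^ (D.R - 1))) :
    ‖(y ^ D.Q * τ ^ (D.Q - 1)) ^ D.R - algebraMap K Ω (D.c 0) * (y ^ D.Q * τ ^ (D.Q - 1))‖ < 1 := by
  have hX0 := pow_ne_zero (D.R - 1) hτ0
  have hX1 := D.norm_pow_R_sub_one_lt_one hτ
  have hunit : ‖y ^ D.Q * τ ^ (D.Q - 1)‖ = 1 := by
    rw [norm_mul, norm_pow, norm_pow, D.norm_pow_Q_mul_norm_pow_eq_one hτ0 hτ hy hyW]
  have hlarge := D.norm_f_sub_pow_lt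
    (D.one_lt_norm_of_notMem_closedPart hX0 hX1 hy hyW) le_rfl
  rw [D.q_pow_k] at hlarge
  rw [D.unit_pow_R_sub_eq hτ0 hy]
  refine norm_sub_lt_of_lt ?_ ?_
  · rw [norm_mul, hunit, one_mul, norm_div, div_lt_one (norm_pos_iff.2 hX0)]
    exact D.norm_f_sub_lt_of_norm_lt_one hX0 hX1
  · have hone : ‖(y ^ D.Q * τ ^ (D.Q - 1)) ^ D.R‖ = 1 := by rw [norm_pow, hunit, one_pow]
    rw [← hone, D.unit_pow_R, norm_mul, norm_mul (y ^ _), norm_pow y]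
    refine mul_lt_mul_of_pos_right hlarge (norm_pos_iff.2 ?_)
    exact mul_ne_zero (pow_ne_zero _ hX0) (pow_ne_zero _ hτ0)

theorem exists_norm_unit_sub_algebraMap_lt_one [IsAlgClosed K] (hy : y ∈ D.V (τ ^ (D.R - 1)))
    (hyW : y ∉ D.closedPart (τ ^ (D.R - 1))) :
    ∃ c : K, ‖y ^ D.Q * τ ^ (D.Q - 1) - algebraMap K Ω c‖ < 1 := by
  have hmonic : (X ^ D.R - C (D.c 0) * X : K[X]).Monic := by
    refine monic_X_pow_sub ((degree_C_mul_X_le _).trans_lt ?_)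
    exact_mod_cast D.one_lt_R
  obtain ⟨c, -, hc⟩ := exists_norm_sub_algebraMap_lt_one hmonic (y ^ D.Q * τ ^ (D.Q - 1))
    (by simpa using D.norm_unit_pow_R_sub_lt_one hτ0 hτ hy hyW)
  exact ⟨c, hc⟩

end Residue

variable {k : Type*} [NontriviallyNormedField k] [NormedAlgebra k Ω]
  [CompleteSpace k] [IsUltrametricDist k] [Algebra K k] [IsScalarTower K k Ω] [IsAlgClosed K]
  [Algebra.IsAlgebraic k Ω] {P : k[X]} {ϖ : k}

theorem algEquiv_sub_mem_closedPart (hϖ : IsUniformizer ϖ) (hP : P ∣ D.H (ϖ ^ (D.R - 1)))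
    (hy : y ∈ zeros P Ω) (hyW : y ∉ D.closedPart (algebraMap k Ω ϖ ^ (D.R - 1)))
    (σ : Ω ≃ₐ[k] Ω) : σ y - y ∈ D.closedPart (algebraMap k Ω ϖ ^ (D.R - 1)) := by
  set τ := algebraMap k Ω ϖ with hτ
  have hτ0 : τ ≠ 0 := by simpa [hτ] using hϖ.ne_zero
  have hτ1 : ‖τ‖ < 1 := (norm_algebraMap' Ω ϖ).trans_lt hϖ.norm_lt_one
  have hV : zeros P Ω ⊆ D.V (τ ^ (D.R - 1)) := by
    simpa [hτ] using D.zeros_subset_V (Ω := Ω) (pow_ne_zero _ hϖ.ne_zero) hP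
  obtain ⟨c, hc⟩ := D.exists_norm_unit_sub_algebraMap_lt_one hτ0 hτ1 (hV hy) hyW
  have hσ : ‖σ y ^ D.Q * τ ^ (D.Q - 1) - algebraMap K Ω c‖ < 1 := by
    rw [← norm_algEquiv_apply σ] at hc
    simpa [hτ, algEquiv_apply_algebraMap_of_tower] using hc
  have hlt : ‖(σ y - y) ^ D.Q * τ ^ (D.Q - 1)‖ < 1 := by
    rw [Q, D.sub_pow_q_pow, ← Q, sub_mul, ← sub_sub_sub_cancel_right _ _ (algebraMap K Ω c)]
    exact norm_sub_lt_of_lt hσ hc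
  by_contra hdiff
  refine hlt.ne ?_
  rw [norm_mul, norm_pow, norm_pow]
  exact D.norm_pow_Q_mul_norm_pow_eq_one hτ0 hτ1 (D.sub_mem_V (pow_ne_zero _ hτ0)
    (hV (algEquiv_apply_mem_zeros σ hy)) (hV hy)) hdiff

variable [IsAlgClosed Ω]

theorem add_mem_zeros_of_mem_closedPart (hϖ : IsUniformizer ϖ) (hP : P ∣ D.H (ϖ ^ (D.R - 1)))
    (hy : y ∈ zeros P Ω) (hyW : y ∉ D.closedPart (algebraMap k Ω ϖ ^ (D.R - 1))) {u : Ω}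
    (hu : u ∈ D.closedPart (algebraMap k Ω ϖ ^ (D.R - 1))) : y + u ∈ zeros P Ω := by
  classical
  have hτ0 : algebraMap k Ω ϖ ≠ 0 := by simpa using hϖ.ne_zero
  have hτ1 : ‖algebraMap k Ω ϖ‖ < 1 := (norm_algebraMap' Ω ϖ).trans_lt hϖ.norm_lt_one
  have hX0 := pow_ne_zero (D.R - 1) hτ0
  have hyV : y ∈ D.V (algebraMap k Ω ϖ ^ (D.R - 1)) := by
    simpa using D.zeros_subset_V (pow_ne_zero _ hϖ.ne_zero) hP hy
  have hnorm := D.norm_pow_Q_mul_norm_pow_eq_one hτ0 hτ1 hyV hyW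
  rw [norm_algebraMap'] at hnorm
  have hdvd : D.Q ∣ (minpoly k y).natDegree := by
    refine hϖ.dvd_natDegree_minpoly (D.ne_zero_of_notMem_closedPart hX0 hyW)
      (m := -(D.Q - 1 : ℕ)) ⟨1, 1, ?_⟩ ?_
    · rw [Nat.cast_sub D.Q_pos]
      ring
    · rw [zpow_neg, zpow_natCast]
      exact eq_inv_of_mul_eq_one_left hnorm
  refine D.subset_zeros_of_card_dvd (pow_ne_zero _ hϖ.ne_zero) hP hy
    (B := (D.closedPart (algebraMap k Ω ϖ ^ (D.R - 1))).image (y + ·)) ?_ (fun σ => ?_)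
    (Finset.mem_image_of_mem _ hu)
  · rwa [Finset.card_image_of_injective _ (add_right_injective y),
      D.card_closedPart hX0 (D.norm_pow_R_sub_one_lt_one hτ1)]
  · exact Finset.mem_image.2 ⟨_, D.algEquiv_sub_mem_closedPart hϖ hP hy hyW σ, by ring⟩

end ZeroPlace

end CurveData

theorem ne_zero_of_mem_zeros {k Ω : Type*} [Field k] [Field Ω] [Algebra k Ω] {P : k[X]} {y : Ω}
    (hP0 : P.eval 0 ≠ 0) (hy : y ∈ zeros P Ω) : y ≠ 0 := by
  rintro rfl
  refine hP0 ((algebraMap k Ω).injective ?_)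
  rw [map_zero, ← aeval_algebraMap_apply_eq_algebraMap_eval, map_zero]
  exact aeval_eq_zero_of_mem_zeros hy

namespace CurveData

section Line

variable {K : Type*} [Field K] (D : CurveData K)

/-- The polynomial `x ^ q Y - x Y ^ q` in `Y`, whose zeros are the multiples of `x` by elements
of the field with `q` elements. -/
noncomputable def line {A : Type*} [CommRing A] (x : A) : A[X] := C (x ^ D.q) * X - C x * X ^ D.q

section Degree

variable {A : Type*} [CommRing A] [IsDomain A] {x : A}

theorem natDegree_C_mul_X_lt (hx : x ≠ 0) :
    (C (x ^ D.q) * X).natDegree < (C x * X ^ D.q).natDegree := by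
  rw [natDegree_C_mul_X_pow _ _ hx, natDegree_C_mul_X _ (pow_ne_zero _ hx)]
  exact D.one_lt_q

theorem natDegree_line (hx : x ≠ 0) : (D.line x).natDegree = D.q := by
  rw [line, natDegree_sub_eq_right_of_natDegree_lt (D.natDegree_C_mul_X_lt hx),
    natDegree_C_mul_X_pow _ _ hx]

theorem line_ne_zero (hx : x ≠ 0) : D.line x ≠ 0 :=
  ne_zero_of_natDegree_gt ((D.natDegree_line hx).symm ▸ D.q_pos)

theorem leadingCoeff_line (hx : x ≠ 0) : (D.line x).leadingCoeff = -x := by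
  rw [line, leadingCoeff_sub_of_degree_lt' (degree_lt_degree (D.natDegree_C_mul_X_lt hx)),
    leadingCoeff_C_mul_X_pow]

end Degree

variable {L : Type*} [Field L] {x : L}

theorem eval_line_algebraMap_mul [Algebra K L] {c : K} (hc : c ^ D.q = c) :
    (D.line x).eval (algebraMap K L c * x) = 0 := by
  simp only [line, eval_sub, eval_mul, eval_C, eval_X, eval_pow, mul_pow, ← map_pow, hc]
  ring

theorem eval_ne_zero_of_eval_line_eq_zero [Algebra K L] {P P' : L[X]} {y : L} (hx : x ≠ 0)
    (h : P * P' * D.line x = D.H x) (hy : (D.line x).eval y = 0) : P.eval y ≠ 0 := by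
  intro hP
  have hsep : (P * (P' * D.line x)).Separable := by
    rw [← mul_assoc, h]
    exact D.separable_H hx
  obtain ⟨a, b, hab⟩ := hsep.isCoprime
  simpa [hP, hy] using congrArg (eval y) hab

end Line

section ZeroPlaceCount

variable {K : Type*} [Field K] (D : CurveData K) {Ω : Type*} [NormedField Ω]
  [IsUltrametricDist Ω] [Algebra K Ω] [IsTrivialNormOn K Ω] {k : Type*}
  [NontriviallyNormedField k] [NormedAlgebra k Ω] [Algebra K k] [IsScalarTower K k Ω]
  {P P' : k[X]} {ϖ : k}

open Classical in
/-- The norm of the constant term of `P` is an integral power of `‖ϖ‖`, while each zero outside the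
closed part has norm `‖ϖ‖ ^ (-(Q - 1) / Q)`. -/
theorem Q_dvd_card_zeros_sdiff_closedPart [IsAlgClosed Ω] (hϖ : IsUniformizer ϖ)
    (hP : P ∣ D.H (ϖ ^ (D.R - 1))) (hP0 : P.eval 0 ≠ 0) :
    D.Q ∣ (zeros P Ω \ D.closedPart (algebraMap k Ω ϖ ^ (D.R - 1))).card := by
  have hτ0 : algebraMap k Ω ϖ ≠ 0 := by simpa using hϖ.ne_zero
  have hτ1 : ‖algebraMap k Ω ϖ‖ < 1 := (norm_algebraMap' Ω ϖ).trans_lt hϖ.norm_lt_one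
  have hX0 := pow_ne_zero (D.R - 1) hτ0
  have hV : zeros P Ω ⊆ D.V (algebraMap k Ω ϖ ^ (D.R - 1)) := by
    simpa using D.zeros_subset_V (Ω := Ω) (pow_ne_zero _ hϖ.ne_zero) hP
  obtain ⟨j, hj⟩ := hϖ.exists_zpow_prod_aroots (Ω := Ω) hP0
  rw [← prod_zeros ((D.separable_H (pow_ne_zero _ hϖ.ne_zero)).of_dvd hP), map_zero] at hj
  set W := D.closedPart (algebraMap k Ω ϖ ^ (D.R - 1))
  have hin : ∀ y ∈ zeros P Ω ∩ W, ‖0 - y‖ ^ D.Q = ‖ϖ‖ ^ (((D.R - 1) * D.Q : ℕ) : ℤ) := by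
    intro y hy
    obtain ⟨hyP, hyW⟩ := Finset.mem_inter.1 hy
    rw [zero_sub, norm_neg, D.norm_eq_of_mem_closedPart hX0 (D.norm_pow_R_sub_one_lt_one hτ1) hyW
      (ne_zero_of_mem_zeros hP0 hyP), norm_pow, norm_algebraMap', ← pow_mul, zpow_natCast]
  have hout : ∀ y ∈ zeros P Ω \ W, ‖0 - y‖ ^ D.Q = ‖ϖ‖ ^ (-(D.Q - 1 : ℕ) : ℤ) := by
    intro y hy
    obtain ⟨hyP, hyW⟩ := Finset.mem_sdiff.1 hy
    have hnorm := D.norm_pow_Q_mul_norm_pow_eq_one hτ0 hτ1 (hV hyP) hyW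
    rw [norm_algebraMap'] at hnorm
    rw [zero_sub, norm_neg, zpow_neg, zpow_natCast]
    exact eq_inv_of_mul_eq_one_left hnorm
  have hpow := congrArg (· ^ D.Q) hj
  simp only [← Finset.prod_pow] at hpow
  rw [← Finset.prod_inter_mul_prod_sdiff _ W, Finset.prod_congr rfl hin,
    Finset.prod_congr rfl hout, Finset.prod_const, Finset.prod_const, ← zpow_natCast,
    ← zpow_natCast, ← zpow_natCast, ← zpow_mul, ← zpow_mul, ← zpow_mul,
    ← zpow_add₀ hϖ.norm_pos.ne'] at hpow
  have hexp := hϖ.zpow_injective hpow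
  refine Int.natCast_dvd_natCast.1
    ⟨(zeros P Ω \ W).card + j - (D.R - 1 : ℕ) * (zeros P Ω ∩ W).card, ?_⟩
  push_cast [Nat.cast_sub D.Q_pos] at hexp ⊢
  linear_combination hexp

variable [IsAlgClosed K] [CompleteSpace k] [IsUltrametricDist k] [Algebra.IsAlgebraic k Ω]
  [IsAlgClosed Ω]

open Classical in
/-- The zeros of `P` outside the closed part form a union of cosets of it, so a zero of `P'` in such
a coset would also be a zero of `P`. -/
theorem card_filter_sub_mem_closedPart_le (hϖ : IsUniformizer ϖ)
    (hP : P ∣ D.H (ϖ ^ (D.R - 1))) (hPP' : IsCoprime P P') :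
    {z ∈ zeros P Ω ×ˢ zeros P' Ω |
        z.1 - z.2 ∈ D.closedPart (algebraMap k Ω ϖ ^ (D.R - 1))}.card ≤
      (zeros P Ω ∩ D.closedPart (algebraMap k Ω ϖ ^ (D.R - 1))).card *
        (zeros P' Ω ∩ D.closedPart (algebraMap k Ω ϖ ^ (D.R - 1))).card := by
  have hX0 : algebraMap k Ω ϖ ^ (D.R - 1) ≠ 0 := pow_ne_zero _ (by simpa using hϖ.ne_zero)
  rw [← Finset.card_product]
  refine Finset.card_le_card fun z hz => ?_
  obtain ⟨hzz, hsub⟩ := Finset.mem_filter.1 hz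
  obtain ⟨hz1, hz2⟩ := Finset.mem_product.1 hzz
  have hneg : z.2 - z.1 ∈ D.closedPart (algebraMap k Ω ϖ ^ (D.R - 1)) := by
    simpa using D.sub_mem_closedPart hX0 (D.zero_mem_closedPart hX0) hsub
  have hzW : z.1 ∈ D.closedPart (algebraMap k Ω ϖ ^ (D.R - 1)) := by
    by_contra hzW
    have hmem := D.add_mem_zeros_of_mem_closedPart hϖ hP hz1 hzW hneg
    rw [add_sub_cancel] at hmem
    exact Finset.disjoint_left.1 (disjoint_zeros_of_isCoprime hPP') hmem hz2
  refine Finset.mem_product.2 ⟨Finset.mem_inter.2 ⟨hz1, hzW⟩, Finset.mem_inter.2 ⟨hz2, ?_⟩⟩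
  simpa using D.sub_mem_closedPart hX0 hzW hsub

end ZeroPlaceCount

section LineZeros

variable {K : Type*} [Field K] (D : CurveData K) {Ω : Type*} [NormedField Ω] {k : Type*} [Field k]
  [Algebra k Ω] {x : k}

theorem norm_le_of_mem_zeros_line {y : Ω} (hx : x ≠ 0) (hy : y ∈ zeros (D.line x) Ω) :
    ‖y‖ ≤ ‖algebraMap k Ω x‖ := by
  have hroot := aeval_eq_zero_of_mem_zeros hy
  simp only [line, map_sub, map_mul, map_pow, aeval_C, aeval_X, sub_eq_zero] at hroot
  have hnorm := congrArg norm hroot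
  simp only [norm_mul, norm_pow] at hnorm
  have hxpos : 0 < ‖algebraMap k Ω x‖ := by simpa using hx
  by_contra! hlt
  obtain ⟨n, hn⟩ : ∃ n, D.q = n + 1 + 1 := ⟨D.q - 2, by have := D.one_lt_q; omega⟩
  rw [hn, pow_succ _ (n + 1), pow_succ _ (n + 1), mul_comm ‖algebraMap k Ω x‖, mul_right_comm,
    mul_assoc, mul_assoc] at hnorm
  exact (pow_lt_pow_left₀ hlt hxpos.le n.succ_ne_zero).ne
    (mul_right_cancel₀ (mul_pos (hxpos.trans hlt) hxpos).ne' hnorm)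

variable [IsUltrametricDist Ω] [Algebra K Ω] [IsTrivialNormOn K Ω] [Algebra K k]
  [IsScalarTower K k Ω] [IsAlgClosed Ω] {P P' : k[X]}

open Classical in
theorem card_zeros_inter_closedPart_add (hx : x ≠ 0) (hx1 : ‖algebraMap k Ω x‖ < 1)
    (h : P * P' * D.line x = D.H x) :
    (zeros P Ω ∩ D.closedPart (algebraMap k Ω x)).card +
      (zeros P' Ω ∩ D.closedPart (algebraMap k Ω x)).card + D.q = D.Q := by
  have hX0 : algebraMap k Ω x ≠ 0 := by simpa using hx
  have hsep : (P * P' * D.line x).Separable := h ▸ D.separable_H hx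
  have hVW : zeros (D.H x) Ω ∩ D.closedPart (algebraMap k Ω x) =
      D.closedPart (algebraMap k Ω x) := by
    rw [zeros, aroots, D.map_algebraMap_H]
    exact Finset.inter_eq_right.2 (D.closedPart_subset_V _)
  have hline : zeros (D.line x) Ω ∩ D.closedPart (algebraMap k Ω x) = zeros (D.line x) Ω := by
    refine Finset.inter_eq_left.2 fun y hy => D.mem_closedPart.2
      ⟨D.zeros_subset_V hx (h ▸ dvd_mul_left _ _) hy, D.norm_le_of_mem_zeros_line hx hy⟩
  have hcard := congrArg Finset.card hVW
  rwa [← h, card_zeros_mul_inter hsep, card_zeros_mul_inter hsep.of_mul_left, hline,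
    card_zeros hsep.of_mul_right, D.natDegree_line hx, D.card_closedPart hX0 hx1] at hcard

end LineZeros

end CurveData

/-! ### Factors at the place above infinity -/

namespace CurveData

section AlgebraicIdentities

variable {K : Type*} [Field K] (D : CurveData K) {L : Type*} [Field L] [Algebra K L] {x y : L}

/-- Dividing the equation of the curve by `x ^ (Q R)` and keeping its leading terms shows that
`ρ = y / x` is nearly a root of `ρ ^ R = ρ`. -/
theorem div_pow_R_sub_pow_Q_eq (hx0 : x ≠ 0) (hy : y ∈ D.V x) :
    ((y / x) ^ D.R - y / x) ^ D.Q =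
      ((D.f x - x ^ (D.Q * D.R)) * (y / x) ^ D.Q - (D.f y - y ^ (D.Q * D.R))) /
        x ^ (D.Q * D.R) := by
  have hmem := (D.mem_V hx0).1 hy
  rw [Q, D.sub_pow_q_pow, ← Q, ← pow_mul, mul_comm D.R, eq_div_iff (pow_ne_zero _ hx0)]
  simp only [div_pow]
  field_simp
  linear_combination hmem

theorem f_mul_pow_sub_eq (hx0 : x ≠ 0) (hy : y ∈ D.V x) (c : K) :
    D.f x * (y - algebraMap K L c * x) ^ D.Q - D.f (y - algebraMap K L c * x) * x ^ D.Q =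
      x ^ D.Q * (D.f (algebraMap K L c * x) - algebraMap K L c ^ D.Q * D.f x) := by
  rw [D.f_sub, Q, D.sub_pow_q_pow, ← Q]
  linear_combination -(D.mem_V hx0).1 hy

theorem f_algebraMap_mul_sub {c : K} (hc : c ^ D.R = c) :
    D.f (algebraMap K L c * x) - algebraMap K L c ^ D.Q * D.f x =
      ∑ j ∈ Finset.range D.k,
        algebraMap K L (D.c j * (c ^ D.q ^ j - c ^ D.Q)) * x ^ D.q ^ j := by
  have htop : c ^ D.q ^ D.k = c ^ D.Q := by rw [D.q_pow_k, mul_comm, pow_mul, hc]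
  have hsum : ∀ j, algebraMap K L (D.c j) * (algebraMap K L c * x) ^ D.q ^ j -
      algebraMap K L c ^ D.Q * (algebraMap K L (D.c j) * x ^ D.q ^ j) =
        algebraMap K L (D.c j * (c ^ D.q ^ j - c ^ D.Q)) * x ^ D.q ^ j := by
    intro j
    rw [map_mul, map_sub, map_pow, map_pow]
    ring
  rw [f, f, Finset.mul_sum, ← Finset.sum_sub_distrib, Finset.sum_congr rfl fun j _ => hsum j,
    Finset.sum_range_succ, htop, sub_self, mul_zero, map_zero, zero_mul, add_zero]

end AlgebraicIdentities

theorem Q_add_q_pow_le {K : Type*} [Field K] (D : CurveData K) :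
    D.Q + D.q ^ (D.k - 1) ≤ D.Q * D.R := by
  have hQ : D.Q ≤ D.q ^ (D.k - 1) :=
    Nat.pow_le_pow_right D.q_pos (Nat.le_sub_one_of_lt D.t_lt_k)
  have hk : D.Q * D.R = D.q ^ (D.k - 1) * D.q := by
    rw [← D.q_pow_k, ← pow_succ, Nat.sub_add_cancel (Nat.one_le_of_lt D.t_lt_k)]
  have := D.one_lt_q
  nlinarith

section Infinity

variable {K : Type*} [Field K] (D : CurveData K) {Ω : Type*} [NormedField Ω] [Algebra K Ω]

/-- The elements of `V x` whose quotient by `x` reduces to the constant `c`. -/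
noncomputable def residueClass (x : Ω) (c : K) : Finset Ω :=
  {y ∈ D.V x | ‖y - algebraMap K Ω c * x‖ < ‖x‖}

variable {D} {x y z : Ω} {c : K}

theorem mem_residueClass :
    y ∈ D.residueClass x c ↔ y ∈ D.V x ∧ ‖y - algebraMap K Ω c * x‖ < ‖x‖ := Finset.mem_filter

variable [IsUltrametricDist Ω]

theorem eq_of_mem_residueClass [IsTrivialNormOn K Ω] {d : K} (hc : y ∈ D.residueClass x c)
    (hd : y ∈ D.residueClass x d) : c = d := by
  have hlt := norm_sub_lt_of_lt (mem_residueClass.1 hd).2 (mem_residueClass.1 hc).2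
  rw [sub_sub_sub_cancel_left, ← sub_mul, norm_mul] at hlt
  refine eq_of_norm_algebraMap_sub_lt_one (Ω := Ω) ?_
  exact lt_of_mul_lt_mul_right (hlt.trans_eq (one_mul _).symm) (norm_nonneg x)

variable (D)

theorem sub_mem_openPart_of_mem_residueClass (hx0 : x ≠ 0) (hy : y ∈ D.residueClass x c)
    (hz : z ∈ D.residueClass x c) : y - z ∈ D.openPart x := by
  rw [mem_residueClass] at hy hz
  refine mem_openPart.2 ⟨D.sub_mem_V hx0 hy.1 hz.1, ?_⟩
  simpa using norm_sub_lt_of_lt hy.2 hz.2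

theorem mem_residueClass_of_sub_mem_openPart (hx0 : x ≠ 0) (hy : y ∈ D.residueClass x c)
    (hyz : y - z ∈ D.openPart x) : z ∈ D.residueClass x c := by
  rw [mem_residueClass] at *
  rw [mem_openPart] at hyz
  refine ⟨by simpa using D.sub_mem_V hx0 hy.1 hyz.1, ?_⟩
  have hz : z - algebraMap K Ω c * x = y - algebraMap K Ω c * x - (y - z) := by ring
  exact hz ▸ norm_sub_lt_of_lt hy.2 hyz.2

variable [IsTrivialNormOn K Ω]

theorem norm_f_mul_pow_lt (hy : 1 < ‖y‖) (hyx : ‖y‖ < ‖x‖) :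
    ‖D.f y * x ^ D.Q‖ < ‖D.f x * y ^ D.Q‖ := by
  obtain ⟨R', hR'⟩ : ∃ R', D.R = R' + 2 := ⟨D.R - 2, by have := D.one_lt_R; omega⟩
  rw [norm_mul, norm_mul, norm_pow, norm_pow, D.norm_f_of_one_lt_norm (hy.trans hyx),
    D.norm_f_of_one_lt_norm hy, hR', mul_add, mul_two, ← add_assoc, pow_add, pow_add ‖x‖,
    mul_assoc, mul_assoc, mul_comm (‖x‖ ^ D.Q)]
  have := D.Q_pos
  refine mul_lt_mul_of_pos_right (pow_lt_pow_left₀ hyx (norm_nonneg y) (by positivity)) ?_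
  have := one_pos.trans hy
  have := this.trans hyx
  positivity

variable (hx : 1 < ‖x‖)
include hx

theorem card_residueClass_le [IsAlgClosed Ω] : (D.residueClass x c).card ≤ D.Q := by
  have hx0 : x ≠ 0 := norm_pos_iff.1 (one_pos.trans hx)
  rw [← D.card_openPart hx]
  rcases (D.residueClass x c).eq_empty_or_nonempty with h | ⟨z, hz⟩
  · simp [h]
  · exact Finset.card_le_card_of_injOn (· - z)
      (fun y hy => D.sub_mem_openPart_of_mem_residueClass hx0 hy hz) (sub_left_injective.injOn)

theorem norm_div_pow_R_sub_lt_one (hy : y ∈ D.V x) : ‖(y / x) ^ D.R - y / x‖ < 1 := by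
  have hx0 : x ≠ 0 := norm_pos_iff.1 (one_pos.trans hx)
  have hyx := D.norm_le_of_mem_V hx hy
  have hfx := D.norm_f_sub_pow_lt hx le_rfl
  have hfy := D.norm_f_sub_pow_lt hx hyx
  rw [D.q_pow_k] at hfx hfy
  refine (pow_lt_one_iff_of_nonneg (norm_nonneg _) D.Q_pos.ne').1 ?_
  rw [← norm_pow, D.div_pow_R_sub_pow_Q_eq hx0 hy, norm_div, norm_pow, div_lt_one (by positivity)]
  refine norm_sub_lt_of_lt ?_ hfy
  rw [norm_mul, norm_pow, norm_div]
  refine (mul_le_of_le_one_right (norm_nonneg _) ?_).trans_lt hfx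
  exact pow_le_one₀ (by positivity) (div_le_one_of_le₀ hyx (norm_nonneg x))

theorem exists_mem_residueClass [IsAlgClosed K] (hy : y ∈ D.V x) :
    ∃ c : K, c ^ D.R = c ∧ y ∈ D.residueClass x c := by
  have hx0 : x ≠ 0 := norm_pos_iff.1 (one_pos.trans hx)
  have hmonic : (X ^ D.R - X : K[X]).Monic :=
    monic_X_pow_sub (degree_X_le.trans_lt (mod_cast D.one_lt_R))
  obtain ⟨c, hc, hyc⟩ := exists_norm_sub_algebraMap_lt_one hmonic (y / x)
    (by simpa using D.norm_div_pow_R_sub_lt_one hx hy)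
  refine ⟨c, by simpa [sub_eq_zero] using hc, mem_residueClass.2 ⟨hy, ?_⟩⟩
  rwa [← div_mul_cancel₀ y hx0, mul_comm (y / x), mul_comm (algebraMap K Ω c), ← mul_sub, norm_mul,
    mul_lt_iff_lt_one_right (one_pos.trans hx)]

theorem norm_f_algebraMap_mul_sub_le (hc : c ^ D.R = c) :
    ‖D.f (algebraMap K Ω c * x) - algebraMap K Ω c ^ D.Q * D.f x‖ ≤ ‖x‖ ^ D.q ^ (D.k - 1) := by
  rw [D.f_algebraMap_mul_sub hc]
  refine IsUltrametricDist.norm_sum_le_of_forall_le_of_nonneg (by positivity) fun j hj =>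
    (norm_algebraMap_mul_le _ _).trans ?_
  rw [norm_pow]
  exact pow_le_pow_right₀ hx.le
    (Nat.pow_le_pow_right D.q_pos (Nat.le_sub_one_of_lt (Finset.mem_range.1 hj)))

/-- If the error term `u` had norm above `1`, the term `f x * u ^ Q` would dominate the
equation. -/
theorem norm_sub_algebraMap_mul_le_one (hc : c ^ D.R = c) (hy : y ∈ D.residueClass x c) :
    ‖y - algebraMap K Ω c * x‖ ≤ 1 := by
  have hx0 : x ≠ 0 := norm_pos_iff.1 (one_pos.trans hx)
  obtain ⟨hyV, hyx⟩ := mem_residueClass.1 hy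
  have hident := D.f_mul_pow_sub_eq hx0 hyV c
  set u := y - algebraMap K Ω c * x
  by_contra! hu
  have hdom := norm_eq_of_norm_sub_lt ((congrArg norm (sub_sub_cancel _ _)).trans_lt
    (D.norm_f_mul_pow_lt hu hyx))
  rw [hident, norm_mul, norm_mul, norm_pow, norm_pow, D.norm_f_of_one_lt_norm hx] at hdom
  refine lt_irrefl (‖x‖ ^ (D.Q * D.R)) ?_
  calc ‖x‖ ^ (D.Q * D.R) < ‖x‖ ^ (D.Q * D.R) * ‖u‖ ^ D.Q :=
        lt_mul_of_one_lt_right (by positivity) (one_lt_pow₀ hu D.Q_pos.ne')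
    _ ≤ ‖x‖ ^ D.Q * ‖x‖ ^ D.q ^ (D.k - 1) := by
        rw [← hdom]
        gcongr
        exact D.norm_f_algebraMap_mul_sub_le hx hc
    _ ≤ ‖x‖ ^ (D.Q * D.R) := by
        rw [← pow_add]
        exact pow_le_pow_right₀ hx.le D.Q_add_q_pow_le

end Infinity

theorem algebraMap_mul_mem_zeros_line {K k Ω : Type*} [Field K] (D : CurveData K) [Field k]
    [Field Ω] [Algebra K k] [Algebra k Ω] [Algebra K Ω] [IsScalarTower K k Ω] {x : k} {c : K}
    (hx : x ≠ 0) (hc : c ^ D.q = c) :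
    algebraMap K Ω c * algebraMap k Ω x ∈ zeros (D.line x) Ω := by
  rw [mem_zeros (D.line_ne_zero hx), IsScalarTower.algebraMap_apply K k Ω, ← map_mul,
    aeval_algebraMap_apply, coe_aeval_eq_eval, D.eval_line_algebraMap_mul hc, map_zero]

section InfinityFactors

variable {K : Type*} [Field K] (D : CurveData K) {Ω : Type*} [NormedField Ω]
  [IsUltrametricDist Ω] [Algebra K Ω] [IsTrivialNormOn K Ω] {k : Type*} [Field k] [Algebra k Ω]
  [Algebra K k] [IsAlgClosed Ω] {P P' : k[X]} {x : k} {c : K}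
  (hx : 1 < ‖algebraMap k Ω x‖) (h : P * P' * D.line x = D.H x)
include hx h

open Classical in
theorem sum_card_zeros_inter_residueClass_le (c : K) :
    (zeros P Ω ∩ D.residueClass (algebraMap k Ω x) c).card +
      (zeros P' Ω ∩ D.residueClass (algebraMap k Ω x) c).card +
        (zeros (D.line x) Ω ∩ D.residueClass (algebraMap k Ω x) c).card ≤ D.Q := by
  have hx0 : x ≠ 0 := by
    rintro rfl
    simp [zero_le_one.not_gt] at hx
  have hsep : (P * P' * D.line x).Separable := h ▸ D.separable_H hx0
  rw [← card_zeros_mul_inter hsep.of_mul_left, ← card_zeros_mul_inter hsep]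
  exact (Finset.card_le_card Finset.inter_subset_right).trans (D.card_residueClass_le hx)

open Classical in
theorem card_zeros_inter_residueClass_lt [IsScalarTower K k Ω] (hc : c ^ D.q = c) :
    (zeros P Ω ∩ D.residueClass (algebraMap k Ω x) c).card +
      (zeros P' Ω ∩ D.residueClass (algebraMap k Ω x) c).card < D.Q := by
  have hx0 : x ≠ 0 := by
    rintro rfl
    simp [zero_le_one.not_gt] at hx
  refine (Nat.lt_add_of_pos_right
    (Finset.card_pos.2 ⟨algebraMap K Ω c * algebraMap k Ω x, ?_⟩)).trans_le
    (D.sum_card_zeros_inter_residueClass_le hx h c)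
  have hmem := D.algebraMap_mul_mem_zeros_line (Ω := Ω) hx0 hc
  refine Finset.mem_inter.2 ⟨hmem, mem_residueClass.2
    ⟨D.zeros_subset_V hx0 (h ▸ dvd_mul_left _ _) hmem, ?_⟩⟩
  simpa using hx0

end InfinityFactors

end CurveData

section SimpleExtension

variable {k Ω : Type*} [Field k] [Field Ω] [Algebra k Ω]

theorem natDegree_minpoly_dvd_of_mem_adjoin_simple {y z : Ω} (hy : IsIntegral k y)
    (hz : z ∈ IntermediateField.adjoin k {y}) :
    (minpoly k z).natDegree ∣ (minpoly k y).natDegree := by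
  have := IntermediateField.adjoin.finiteDimensional hy
  rw [← IntermediateField.adjoin.finrank hy]
  have hz' : minpoly k (⟨z, hz⟩ : IntermediateField.adjoin k {y}) = minpoly k z :=
    (minpoly.algebraMap_eq (algebraMap (IntermediateField.adjoin k {y}) Ω).injective _).symm
  exact hz' ▸ minpoly.degree_dvd (Algebra.IsIntegral.isIntegral _)

theorem algebraMap_mem_of_tower {K : Type*} [Field K] [Algebra K k] [Algebra K Ω]
    [IsScalarTower K k Ω] (E : IntermediateField k Ω) (c : K) : algebraMap K Ω c ∈ E := by
  rw [IsScalarTower.algebraMap_apply K k Ω]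
  exact E.algebraMap_mem _

end SimpleExtension

namespace CurveData

section LowPart

variable {K : Type*} [Field K] (D : CurveData K) {L : Type*} [Field L] [Algebra K L]

/-- The terms of `f` of degree less than `Q`. -/
noncomputable def lowPart (y : L) : L :=
  algebraMap K L (D.c 0) * y + algebraMap K L (D.c D.i) * y ^ D.q ^ D.i

theorem lowPart_add (x y : L) : D.lowPart (x + y) = D.lowPart x + D.lowPart y := by
  rw [lowPart, lowPart, lowPart, D.add_pow_q_pow]
  ring

theorem sum_range_t_eq_lowPart (y : L) :
    ∑ j ∈ Finset.range D.t, algebraMap K L (D.c j) * y ^ D.q ^ j = D.lowPart y := by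
  rw [Finset.sum_eq_add_of_mem 0 D.i
    (Finset.mem_range.2 (zero_lt_two.trans_le D.two_le_t)) (Finset.mem_range.2 D.i_lt_t)
    D.i_pos.ne, pow_zero, pow_one, lowPart]
  intro j hj hne
  rw [D.c_eq_zero j (Nat.pos_of_ne_zero hne.1) (Finset.mem_range.1 hj) hne.2, map_zero, zero_mul]

theorem exists_f_eq_lowPart_add_pow [IsAlgClosed K] (L : Type*) [Field L] [Algebra K L] :
    ∃ g : K[X], ∀ y : L, D.f y = D.lowPart y + aeval y g ^ D.Q := by
  choose B hB using fun j => IsAlgClosed.exists_pow_nat_eq (D.c (D.t + j)) D.Q_pos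
  refine ⟨∑ j ∈ Finset.range (D.k - D.t + 1), C (B j) * X ^ D.q ^ j, fun y => ?_⟩
  have hk : D.k + 1 = D.t + (D.k - D.t + 1) := by have := D.t_lt_k; omega
  have := D.charP_of_algebra L
  have := Fact.mk D.prime
  rw [f, hk, Finset.sum_range_add, D.sum_range_t_eq_lowPart, map_sum, Q, q, ← pow_mul D.p,
    sum_pow_char_pow, pow_mul D.p, ← q, ← Q]
  congr 1
  refine Finset.sum_congr rfl fun j _ => ?_
  rw [map_mul, aeval_C, map_pow, aeval_X, mul_pow, ← map_pow, hB, ← pow_mul, Q, ← pow_add,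
    add_comm j]

variable {x y : L}

theorem exists_mem_pow_Q_eq [IsAlgClosed K] {k : Type*} [Field k] [Algebra K k] [Algebra k L]
    [IsScalarTower K k L] (hx0 : x ≠ 0) (hy : y ∈ D.V x) {E : IntermediateField k L} (hxE : x ∈ E)
    (hyE : y ∈ E) : ∃ U ∈ E, U ^ D.Q = D.lowPart y - D.lowPart x * (y / x) ^ D.Q := by
  obtain ⟨g, hg⟩ := D.exists_f_eq_lowPart_add_pow L
  have hgE : ∀ z ∈ E, aeval z g ∈ E := fun z hz =>
    IntermediateField.aeval_coe E ⟨z, hz⟩ g ▸ (aeval (⟨z, hz⟩ : E) g).2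
  refine ⟨aeval x g * (y / x) - aeval y g,
    sub_mem (mul_mem (hgE x hxE) (div_mem hyE hxE)) (hgE y hyE), ?_⟩
  have hfy : D.f y = D.f x * (y / x) ^ D.Q := by
    rw [div_pow, mul_div_assoc', eq_div_iff (pow_ne_zero _ hx0), (D.mem_V hx0).1 hy]
  rw [hg, hg] at hfy
  rw [Q, D.sub_pow_q_pow, ← Q, mul_pow]
  linear_combination -hfy

theorem exists_mem_pow_q_pow_eq [IsAlgClosed K] {k : Type*} [Field k] [Algebra K k] [Algebra k L]
    [IsScalarTower K k L] {E : IntermediateField k L} {U z : L} (hUE : U ∈ E) (hzE : z ∈ E)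
    (a b : K) {j : ℕ} (hj : j + 1 ≤ D.t) :
    ∃ w ∈ E, w ^ D.q ^ (j + 1) =
      algebraMap K L b * U ^ D.Q - algebraMap K L a * (z ^ D.q ^ j) ^ D.q ^ D.i := by
  have hroot : ∀ c : K, ∃ d : K, d ^ D.q ^ (j + 1) = c := fun c =>
    IsAlgClosed.exists_pow_nat_eq c (pow_pos D.q_pos _)
  obtain ⟨β, hβ⟩ := hroot b
  obtain ⟨α, hα⟩ := hroot a
  refine ⟨algebraMap K L β * U ^ D.q ^ (D.t - (j + 1)) -
    algebraMap K L α * z ^ D.q ^ (D.i - 1), ?_, ?_⟩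
  · exact sub_mem (mul_mem (algebraMap_mem_of_tower E β) (pow_mem hUE _))
      (mul_mem (algebraMap_mem_of_tower E α) (pow_mem hzE _))
  have hU : D.q ^ (D.t - (j + 1)) * D.q ^ (j + 1) = D.Q := by
    rw [Q, ← pow_add, Nat.sub_add_cancel hj]
  have hz : D.q ^ (D.i - 1) * D.q ^ (j + 1) = D.q ^ j * D.q ^ D.i := by
    rw [← pow_add, ← pow_add]
    congr 1
    have := D.i_pos
    omega
  rw [D.sub_pow_q_pow, mul_pow, mul_pow, ← pow_mul, ← pow_mul, hU, hz, ← map_pow, ← map_pow, hβ,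
    hα, pow_mul]

theorem lowPart_algebraMap_mul_sub (hx0 : x ≠ 0) (c : K) (u : L) :
    D.lowPart (algebraMap K L c * x + u) -
        D.lowPart x * ((algebraMap K L c * x + u) / x) ^ D.Q -
        algebraMap K L (D.c 0 * (c - c ^ D.Q)) * x -
        algebraMap K L (D.c D.i * (c ^ D.q ^ D.i - c ^ D.Q)) * x ^ D.q ^ D.i =
      D.lowPart u - D.lowPart x * (u / x) ^ D.Q := by
  rw [add_div, mul_div_cancel_right₀ _ hx0, lowPart_add, Q, D.add_pow_q_pow, ← Q]
  simp only [lowPart, map_mul, map_sub, map_pow]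
  ring

end LowPart

section Wild

variable {K : Type*} [Field K] (D : CurveData K) {Ω : Type*} [NormedField Ω]
  [IsUltrametricDist Ω] [Algebra K Ω] [IsTrivialNormOn K Ω] {x y : Ω}

theorem norm_lowPart_le {r : ℝ} (hr0 : ‖y‖ ≤ r) (hr : ‖y‖ ^ D.q ^ D.i ≤ r) :
    ‖D.lowPart y‖ ≤ r := by
  refine (IsUltrametricDist.norm_add_le_max _ _).trans (max_le ?_ ?_)
  · exact (norm_algebraMap_mul_le _ _).trans hr0
  · refine (norm_algebraMap_mul_le _ _).trans ?_
    rwa [norm_pow]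

theorem norm_lowPart_sub_le_one (hx : 1 < ‖x‖) (hy : ‖y‖ ≤ 1) :
    ‖D.lowPart y - D.lowPart x * (y / x) ^ D.Q‖ ≤ 1 := by
  refine norm_sub_le_of_norm_le ?_ ?_
  · exact D.norm_lowPart_le hy (pow_le_one₀ (norm_nonneg y) hy)
  · have hlow : ‖D.lowPart x‖ ≤ ‖x‖ ^ D.Q := D.norm_lowPart_le
      (le_self_pow₀ hx.le D.Q_pos.ne')
      (pow_le_pow_right₀ hx.le (Nat.pow_le_pow_right D.q_pos D.i_lt_t.le))
    rw [norm_mul, norm_pow, norm_div, div_pow, mul_div_assoc', div_le_one (by positivity)]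
    exact (mul_le_of_le_one_right (norm_nonneg _) (pow_le_one₀ (norm_nonneg y) hy)).trans hlow

variable {k : Type*} [Field k] [Algebra K k] [IsAlgClosed K]

/-- Solving the approximate equation for its linear term and replacing `x` in the remaining one by
an approximation that is a `q ^ j`-th power yields an approximation by a `q ^ (j + 1)`-th power. -/
theorem exists_mem_norm_sub_pow_le_one [Algebra k Ω] [IsScalarTower K k Ω]
    {E : IntermediateField k Ω} {U : Ω} (hxE : x ∈ E) (hUE : U ∈ E) {a b : K} (hb : b ≠ 0)
    (h : ‖U ^ D.Q - algebraMap K Ω b * x - algebraMap K Ω a * x ^ D.q ^ D.i‖ ≤ 1) :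
    ∀ j ≤ D.t, ∃ z ∈ E, ‖x - z ^ D.q ^ j‖ ≤ 1 := by
  intro j
  induction j with
  | zero => exact fun _ => ⟨x, hxE, by simp⟩
  | succ j ih =>
    intro hj
    obtain ⟨z, hzE, hz⟩ := ih (by omega)
    obtain ⟨w, hwE, hw⟩ := D.exists_mem_pow_q_pow_eq hUE hzE (b⁻¹ * a) b⁻¹ hj
    refine ⟨w, hwE, ?_⟩
    have hbb : algebraMap K Ω b⁻¹ * algebraMap K Ω b = 1 := by
      rw [← map_mul, inv_mul_cancel₀ hb, map_one]
    have hident : x - w ^ D.q ^ (j + 1) =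
        -(algebraMap K Ω b⁻¹ *
            (U ^ D.Q - algebraMap K Ω b * x - algebraMap K Ω a * x ^ D.q ^ D.i)) -
          algebraMap K Ω (b⁻¹ * a) * (x - z ^ D.q ^ j) ^ D.q ^ D.i := by
      rw [hw, D.sub_pow_q_pow, map_mul]
      linear_combination -x * hbb
    rw [hident]
    refine norm_sub_le_of_norm_le ?_ ?_
    · rw [norm_neg]
      exact (norm_algebraMap_mul_le _ _).trans h
    · refine (norm_algebraMap_mul_le _ _).trans ?_
      rw [norm_pow]
      exact pow_le_one₀ (norm_nonneg _) hz

theorem exists_mem_norm_sub_pow_Q_le_one [Algebra k Ω] [IsScalarTower K k Ω] (hx : 1 < ‖x‖)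
    {c : K} (hc : c ^ D.R = c) (hcQ : c ^ D.Q ≠ c) (hy : y ∈ D.residueClass x c)
    {E : IntermediateField k Ω} (hxE : x ∈ E) (hyE : y ∈ E) : ∃ z ∈ E, ‖x - z ^ D.Q‖ ≤ 1 := by
  have hx0 : x ≠ 0 := norm_pos_iff.1 (one_pos.trans hx)
  obtain ⟨U, hUE, hU⟩ := D.exists_mem_pow_Q_eq hx0 (mem_residueClass.1 hy).1 hxE hyE
  have hlow := D.norm_lowPart_sub_le_one hx (D.norm_sub_algebraMap_mul_le_one hx hc hy)
  rw [← D.lowPart_algebraMap_mul_sub hx0 c, add_sub_cancel, ← hU] at hlow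
  exact D.exists_mem_norm_sub_pow_le_one hxE hUE
    (mul_ne_zero D.c_zero_ne (sub_ne_zero.2 hcQ.symm)) hlow D.t le_rfl

end Wild

end CurveData

theorem sum_eq_card_filter_mul_add {ι : Type*} (s : Finset ι) (p : ι → Prop) [DecidablePred p]
    {g : ι → ℝ} {a b : ℝ} (ha : ∀ i ∈ s, p i → g i = a) (hb : ∀ i ∈ s, ¬p i → g i = b) :
    ∑ i ∈ s, g i = {i ∈ s | p i}.card * a + (s.card - {i ∈ s | p i}.card) * b := by
  rw [← Finset.sum_filter_add_sum_filter_not s p,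
    Finset.sum_congr rfl fun i hi => ha i (Finset.mem_filter.1 hi).1 (Finset.mem_filter.1 hi).2,
    Finset.sum_congr rfl fun i hi => hb i (Finset.mem_filter.1 hi).1 (Finset.mem_filter.1 hi).2,
    Finset.sum_const, Finset.sum_const, nsmul_eq_mul, nsmul_eq_mul,
    ← Finset.card_filter_add_card_filter_not (s := s) p]
  push_cast
  ring

namespace CurveData

section CommonResidues

variable {K : Type*} [Field K] (D : CurveData K)

open Classical in
/-- The elements of `K` of degree dividing both `k - t` and `t` over the field with `q` elements:
the only residues at infinity of zeros lying in different factors of the equation. -/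
noncomputable def commonResidues : Finset K :=
  (X ^ D.q ^ (D.k - D.t).gcd D.t - X : K[X]).roots.toFinset

theorem one_lt_q_pow_gcd : 1 < D.q ^ (D.k - D.t).gcd D.t :=
  Nat.one_lt_pow (Nat.gcd_pos_of_pos_right _ (zero_lt_two.trans_le D.two_le_t)).ne' D.one_lt_q

theorem mem_commonResidues {c : K} :
    c ∈ D.commonResidues ↔ c ^ D.q ^ (D.k - D.t).gcd D.t = c := by
  simp [commonResidues, FiniteField.X_pow_card_sub_X_ne_zero K D.one_lt_q_pow_gcd, sub_eq_zero]

theorem card_commonResidues_le : D.commonResidues.card ≤ D.q ^ (D.k - D.t).gcd D.t := by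
  classical
  exact (Multiset.toFinset_card_le _).trans ((card_roots' _).trans_eq
    (FiniteField.X_pow_card_sub_X_natDegree_eq K D.one_lt_q_pow_gcd))

theorem mem_commonResidues_of_pow_eq {c : K} (hR : c ^ D.R = c) (hQ : c ^ D.Q = c) :
    c ∈ D.commonResidues := by
  have hiter : ∀ n, (· ^ D.q)^[n] c = c ^ D.q ^ n := fun n => by rw [pow_iterate]
  have hperR : Function.IsPeriodicPt (· ^ D.q) (D.k - D.t) c := (hiter _).trans hR
  have hperQ : Function.IsPeriodicPt (· ^ D.q) D.t c := (hiter _).trans hQ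
  exact D.mem_commonResidues.2 ((hiter _).symm.trans (hperR.gcd hperQ))

end CommonResidues

section InfinityCount

variable {K : Type*} [Field K] {D : CurveData K} {k Ω : Type*} [NontriviallyNormedField k]
  [NormedField Ω] [NormedAlgebra k Ω] [Algebra K Ω] [CompleteSpace k] [IsUltrametricDist k]
  [Algebra K k] [IsScalarTower K k Ω] [Algebra.IsAlgebraic k Ω] {P P' : k[X]} {ϖ x : k} {y u : Ω}
  {c : K}

theorem algEquiv_apply_mem_residueClass (hx : x ≠ 0) (hP : P ∣ D.H x) (hy : y ∈ zeros P Ω)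
    (hyc : y ∈ D.residueClass (algebraMap k Ω x) c) (σ : Ω ≃ₐ[k] Ω) :
    σ y ∈ D.residueClass (algebraMap k Ω x) c := by
  refine mem_residueClass.2
    ⟨D.zeros_subset_V hx hP (algEquiv_apply_mem_zeros σ hy), ?_⟩
  have h := (mem_residueClass.1 hyc).2
  rw [← norm_algEquiv_apply σ] at h
  simpa [algEquiv_apply_algebraMap_of_tower] using h

variable [IsUltrametricDist Ω] [IsTrivialNormOn K Ω] [IsAlgClosed Ω] [IsAlgClosed K]

theorem Q_dvd_natDegree_minpoly (hϖ : IsUniformizer ϖ) (hc : c ^ D.R = c) (hcQ : c ^ D.Q ≠ c)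
    (hyc : y ∈ D.residueClass (algebraMap k Ω ϖ⁻¹) c) : D.Q ∣ (minpoly k y).natDegree := by
  have hx := hϖ.one_lt_norm_algebraMap_inv (Ω := Ω)
  obtain ⟨z, hz, hxz⟩ := D.exists_mem_norm_sub_pow_Q_le_one hx hc hcQ hyc
    (E := IntermediateField.adjoin k {y}) (IntermediateField.algebraMap_mem _ _)
    (IntermediateField.mem_adjoin_simple_self k y)
  have hnorm : ‖z‖ ^ D.Q = ‖ϖ‖ ^ (-1 : ℤ) := by
    rw [← norm_pow, norm_eq_of_norm_sub_lt (hxz.trans_lt hx), norm_algebraMap', norm_inv,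
      zpow_neg_one]
  have hz0 : z ≠ 0 := by
    rintro rfl
    rw [norm_zero, zero_pow D.Q_pos.ne'] at hnorm
    exact (zpow_pos hϖ.norm_pos _).ne hnorm
  exact (hϖ.dvd_natDegree_minpoly hz0 isCoprime_one_right.neg_right hnorm).trans
    (natDegree_minpoly_dvd_of_mem_adjoin_simple (Algebra.IsIntegral.isIntegral y) hz)

theorem add_mem_zeros_of_mem_openPart (hϖ : IsUniformizer ϖ) (hP : P ∣ D.H ϖ⁻¹)
    (hy : y ∈ zeros P Ω) (hc : c ^ D.R = c) (hcQ : c ^ D.Q ≠ c)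
    (hyc : y ∈ D.residueClass (algebraMap k Ω ϖ⁻¹) c)
    (hu : u ∈ D.openPart (algebraMap k Ω ϖ⁻¹)) : y + u ∈ zeros P Ω := by
  classical
  have hx0 : ϖ⁻¹ ≠ 0 := inv_ne_zero hϖ.ne_zero
  refine D.subset_zeros_of_card_dvd hx0 hP hy
    (B := (D.openPart (algebraMap k Ω ϖ⁻¹)).image (y + ·)) ?_ (fun σ => ?_)
    (Finset.mem_image_of_mem _ hu)
  · rw [Finset.card_image_of_injective _ (add_right_injective y),
      D.card_openPart hϖ.one_lt_norm_algebraMap_inv]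
    exact Q_dvd_natDegree_minpoly hϖ hc hcQ hyc
  · refine Finset.mem_image.2 ⟨σ y - y, ?_, by ring⟩
    exact D.sub_mem_openPart_of_mem_residueClass (by simpa using hϖ.ne_zero)
      (algEquiv_apply_mem_residueClass hx0 hP hy hyc σ) hyc

open Classical in
/-- Zeros of `P` with residue outside the common residues form cosets of the open part, so only
common residues allow a zero of `P'` in the same coset. -/
theorem card_filter_sub_mem_openPart_le (hϖ : IsUniformizer ϖ) (hP : P ∣ D.H ϖ⁻¹)
    (hPP' : IsCoprime P P') :
    {z ∈ zeros P Ω ×ˢ zeros P' Ω | z.1 - z.2 ∈ D.openPart (algebraMap k Ω ϖ⁻¹)}.card ≤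
      ∑ c ∈ D.commonResidues, (zeros P Ω ∩ D.residueClass (algebraMap k Ω ϖ⁻¹) c).card *
        (zeros P' Ω ∩ D.residueClass (algebraMap k Ω ϖ⁻¹) c).card := by
  have hx := hϖ.one_lt_norm_algebraMap_inv (Ω := Ω)
  have hx0 : algebraMap k Ω ϖ⁻¹ ≠ 0 := by simpa using hϖ.ne_zero
  simp only [← Finset.card_product]
  refine le_trans (Finset.card_le_card fun z hz => ?_) Finset.card_biUnion_le
  obtain ⟨hzz, hsub⟩ := Finset.mem_filter.1 hz
  obtain ⟨hz1, hz2⟩ := Finset.mem_product.1 hzz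
  obtain ⟨c, hc, hzc⟩ :=
    D.exists_mem_residueClass hx (D.zeros_subset_V (inv_ne_zero hϖ.ne_zero) hP hz1)
  refine Finset.mem_biUnion.2 ⟨c, D.mem_commonResidues_of_pow_eq hc ?_, Finset.mem_product.2
    ⟨Finset.mem_inter.2 ⟨hz1, hzc⟩, Finset.mem_inter.2 ⟨hz2, ?_⟩⟩⟩
  · by_contra hcQ
    have hneg : z.2 - z.1 ∈ D.openPart (algebraMap k Ω ϖ⁻¹) := by
      simpa using D.sub_mem_openPart hx0 (D.zero_mem_openPart hx0) hsub
    have hmem := add_mem_zeros_of_mem_openPart hϖ hP hz1 hc hcQ hzc hneg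
    rw [add_sub_cancel] at hmem
    exact Finset.disjoint_left.1 (disjoint_zeros_of_isCoprime hPP') hmem hz2
  · exact D.mem_residueClass_of_sub_mem_openPart hx0 hzc hsub

end InfinityCount

section SmallDegree

variable {K : Type*} [Field K] [IsAlgClosed K] {D : CurveData K} {Ω : Type*} [NormedField Ω]
  [IsUltrametricDist Ω] [Algebra K Ω] [IsTrivialNormOn K Ω]

open Classical in
theorem card_zeros_eq_sum_residueClass {k : Type*} [Field k] [Algebra k Ω] [Algebra K k]
    [IsScalarTower K k Ω] {P : k[X]} {x : k} (hm : D.k - D.t = 1) (hx : 1 < ‖algebraMap k Ω x‖)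
    (hP : P ∣ D.H x) :
    (zeros P Ω).card =
      ∑ c ∈ D.commonResidues, (zeros P Ω ∩ D.residueClass (algebraMap k Ω x) c).card := by
  have hx0 : x ≠ 0 := by
    rintro rfl
    simp [zero_le_one.not_gt] at hx
  rw [← Finset.card_biUnion, ← Finset.inter_biUnion, Finset.inter_eq_left.2]
  · intro y hy
    obtain ⟨c, hc, hyc⟩ := D.exists_mem_residueClass hx (D.zeros_subset_V hx0 hP hy)
    refine Finset.mem_biUnion.2 ⟨c, D.mem_commonResidues.2 ?_, hyc⟩
    rwa [hm, Nat.gcd_one_left, ← hm]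
  · intro c _ d _ hcd
    refine Finset.disjoint_left.2 fun y hyc hyd => hcd ?_
    exact eq_of_mem_residueClass (Finset.mem_inter.1 hyc).2 (Finset.mem_inter.1 hyd).2

end SmallDegree

section FixedResidues

open Classical in
theorem sum_log_norm_sub_of_mem_residueClass {K : Type*} [Field K] (D : CurveData K) {Ω : Type*}
    [NormedField Ω] [IsUltrametricDist Ω] [Algebra K Ω] [IsTrivialNormOn K Ω] {x b : Ω} {c : K}
    {S : Finset Ω} (hx : 1 < ‖x‖) (hS : S ⊆ D.V x) (hbc : b ∈ D.residueClass x c) (hbS : b ∉ S) :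
    ∑ y ∈ S, Real.log ‖b - y‖ =
      (S ∩ D.residueClass x c).card * (-(D.Q * (D.R - 1) / (D.Q - 1)) * Real.log ‖x‖) +
        (S.card - (S ∩ D.residueClass x c).card) * Real.log ‖x‖ := by
  have hx0 : x ≠ 0 := norm_pos_iff.1 (one_pos.trans hx)
  rw [← Finset.filter_mem_eq_inter]
  refine sum_eq_card_filter_mul_add S (· ∈ D.residueClass x c) (fun y hy hyc => ?_)
    fun y hy hyc => congrArg Real.log ?_
  · refine D.log_norm_of_mem_openPart hx
      (D.sub_mem_openPart_of_mem_residueClass hx0 hbc hyc) (sub_ne_zero.2 ?_)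
    rintro rfl
    exact hbS hy
  · exact D.norm_eq_of_notMem_openPart hx (D.sub_mem_V hx0 (mem_residueClass.1 hbc).1 (hS hy))
      fun hby => hyc (D.mem_residueClass_of_sub_mem_openPart hx0 hbc hby)

variable {K : Type*} [Field K] {D : CurveData K} {Ω : Type*} [NormedField Ω]
  [IsUltrametricDist Ω] [IsAlgClosed Ω] [Algebra K Ω] [IsTrivialNormOn K Ω] {k : Type*}
  [NontriviallyNormedField k] [NormedAlgebra k Ω] [Algebra K k] [IsScalarTower K k Ω]
  {P P' : k[X]} {ϖ : k} {c : K}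

open Classical in
/-- The valuation of the value of `P` at the point `c X` is an integer. -/
theorem exists_int_card_inter_residueClass_mul_eq (hϖ : IsUniformizer ϖ)
    (h : P * P' * D.line ϖ⁻¹ = D.H ϖ⁻¹) (hc : c ^ D.q = c) :
    ∃ j : ℤ, ((zeros P Ω ∩ D.residueClass (algebraMap k Ω ϖ⁻¹) c).card : ℝ) *
      (D.Q * (D.R - 1) / (D.Q - 1)) = j + (zeros P Ω).card -
        (zeros P Ω ∩ D.residueClass (algebraMap k Ω ϖ⁻¹) c).card := by
  have hx := hϖ.one_lt_norm_algebraMap_inv (Ω := Ω)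
  have hx0 : ϖ⁻¹ ≠ 0 := inv_ne_zero hϖ.ne_zero
  have hX0 : algebraMap k Ω ϖ⁻¹ ≠ 0 := by simpa using hx0
  have hP : P ∣ D.H ϖ⁻¹ := ⟨P' * D.line ϖ⁻¹, by rw [← h, mul_assoc]⟩
  have hb := D.eval_ne_zero_of_eval_line_eq_zero hx0 h (D.eval_line_algebraMap_mul hc)
  obtain ⟨j, hj⟩ := hϖ.exists_zpow_prod_aroots (Ω := Ω) hb
  set X := algebraMap k Ω ϖ⁻¹
  have hbX : algebraMap k Ω (algebraMap K k c * ϖ⁻¹) = algebraMap K Ω c * X := by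
    rw [map_mul, ← IsScalarTower.algebraMap_apply K k Ω]
  have hbV : algebraMap K Ω c * X ∈ D.V X :=
    D.zeros_subset_V hx0 (h ▸ dvd_mul_left _ _) (D.algebraMap_mul_mem_zeros_line hx0 hc)
  have hbS : algebraMap K Ω c * X ∉ zeros P Ω := by
    intro hmem
    have hzero := aeval_eq_zero_of_mem_zeros hmem
    rw [← hbX, aeval_algebraMap_apply, coe_aeval_eq_eval, map_eq_zero] at hzero
    exact hb hzero
  have hsum := D.sum_log_norm_sub_of_mem_residueClass (c := c) hx (D.zeros_subset_V hx0 hP)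
    (mem_residueClass.2 ⟨hbV, by simpa using hX0⟩) hbS
  have hne : ∀ y ∈ zeros P Ω, ‖algebraMap K Ω c * X - y‖ ≠ 0 := fun y hy =>
    norm_ne_zero_iff.2 (sub_ne_zero.2 fun hby => hbS (hby ▸ hy))
  rw [← Real.log_prod hne, ← hbX, prod_zeros ((D.separable_H hx0).of_dvd hP), hj,
    Real.log_zpow] at hsum
  have hlog : Real.log ‖X‖ = -Real.log ‖ϖ‖ := by
    rw [norm_algebraMap', norm_inv, Real.log_inv]
  have hlog0 : Real.log ‖ϖ‖ ≠ 0 := (Real.log_neg hϖ.norm_pos hϖ.norm_lt_one).ne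
  refine ⟨j, mul_right_cancel₀ hlog0 ?_⟩
  rw [hlog] at hsum
  linear_combination -hsum

open Classical in
/-- For `k - t = 1` and `t = 2` the slope `Q (R - 1) / (Q - 1)` is `q ^ 2 / (q + 1)`. -/
theorem q_add_one_dvd_card_inter_residueClass (hm : D.k - D.t = 1) (ht : D.t = 2)
    (hϖ : IsUniformizer ϖ) (h : P * P' * D.line ϖ⁻¹ = D.H ϖ⁻¹) (hc : c ^ D.q = c) :
    D.q + 1 ∣ (zeros P Ω ∩ D.residueClass (algebraMap k Ω ϖ⁻¹) c).card := by
  obtain ⟨j, hj⟩ := exists_int_card_inter_residueClass_mul_eq (Ω := Ω) hϖ h hc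
  set s := (zeros P Ω ∩ D.residueClass (algebraMap k Ω ϖ⁻¹) c).card
  have hq : (1 : ℝ) < D.q := by exact_mod_cast D.one_lt_q
  have hslope : (D.Q * (D.R - 1) / (D.Q - 1) : ℝ) = D.q ^ 2 / (D.q + 1) := by
    rw [Q, R, hm, ht, div_eq_div_iff (by push_cast; nlinarith) (by positivity)]
    push_cast
    ring
  rw [hslope, mul_div_assoc', div_eq_iff (by positivity)] at hj
  have hint : (s : ℤ) * D.q ^ 2 = (j + (zeros P Ω).card - s) * (D.q + 1) := by exact_mod_cast hj
  refine Int.natCast_dvd_natCast.1 ⟨j + (zeros P Ω).card - s * D.q, ?_⟩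
  push_cast
  linear_combination hint

end FixedResidues

end CurveData

/-! ### Resultants and the product formula -/

theorem exists_eq_C_mul_X_pow {K : Type*} [Field K] [IsAlgClosed K] {g : K[X]}
    (hg : ∀ x : K, x ≠ 0 → g.eval x ≠ 0) : ∃ c : K, c ≠ 0 ∧ ∃ i : ℕ, g = C c * X ^ i := by
  have hg0 : g ≠ 0 := by
    rintro rfl
    exact hg 1 one_ne_zero eval_zero
  have hroots : g.roots = Multiset.replicate g.roots.card 0 :=
    Multiset.eq_replicate_card.2 fun x hx => by
      by_contra hx0
      exact hg x hx0 (isRoot_of_mem_roots hx)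
  refine ⟨g.leadingCoeff, leadingCoeff_ne_zero.2 hg0, g.roots.card, ?_⟩
  have hprod := (IsAlgClosed.splits g).eq_prod_roots
  rw [hroots] at hprod
  simpa using hprod

theorem norm_aeval_C_mul_X_pow {K Ω : Type*} [Field K] [NormedField Ω] [Algebra K Ω]
    [IsTrivialNormOn K Ω] {c : K} (hc : c ≠ 0) (i : ℕ) (x : Ω) :
    ‖aeval x (C c * X ^ i)‖ = ‖x‖ ^ i := by
  rw [map_mul, aeval_C, map_pow, aeval_X, norm_mul, norm_algebraMap_eq_one hc, one_mul, norm_pow]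

theorem algebraMap_resultant {k Ω : Type*} [Field k] [Field Ω] [Algebra k Ω] [IsAlgClosed Ω]
    {P P' : k[X]} (hP : P.Separable) (hP' : P'.Separable) :
    algebraMap k Ω (resultant P P') =
      algebraMap k Ω P.leadingCoeff ^ P'.natDegree * algebraMap k Ω P'.leadingCoeff ^ P.natDegree *
        ∏ z ∈ zeros P Ω ×ˢ zeros P' Ω, (z.1 - z.2) := by
  have heval : ∀ y : Ω, (P'.map (algebraMap k Ω)).eval y =
      algebraMap k Ω P'.leadingCoeff * ∏ z ∈ zeros P' Ω, (y - z) := fun y => by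
    rw [(IsAlgClosed.splits _).eval_eq_prod_roots, leadingCoeff_map, prod_zeros hP']
  rw [← resultant_map_map, ← natDegree_map_eq_of_injective (algebraMap k Ω).injective P,
    resultant_eq_prod_eval _ _ _ natDegree_map_le (IsAlgClosed.splits _), leadingCoeff_map,
    ← prod_zeros hP]
  simp only [heval]
  rw [Finset.prod_mul_distrib, Finset.prod_const, card_zeros hP, Finset.prod_product, natDegree_map,
    mul_assoc]

/-- The specialisation at `X = x` of a polynomial in `Y` with coefficients in `K[X]`. -/
noncomputable def specialize {K A : Type*} [CommSemiring K] [Semiring A] [Algebra K A] (x : A)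
    (P : K[X][X]) : A[X] :=
  P.map (aeval x : K[X] →ₐ[K] A).toRingHom

namespace CurveData

section Bivariate

variable {K : Type*} [Field K] (D : CurveData K) {P P' : K[X][X]}

theorem specialize_mul_line (h : P * P' * D.line X = D.H X) {A : Type*} [CommRing A] [Algebra K A]
    (x : A) : specialize x P * specialize x P' * D.line x = D.H x := by
  have hmap := congrArg (Polynomial.map (aeval x : K[X] →ₐ[K] A).toRingHom) h
  have hline : (D.line (X : K[X])).map (aeval x : K[X] →ₐ[K] A).toRingHom = D.line x := by
    simp [line]
  have hH := D.map_H (aeval x : K[X] →ₐ[K] A) X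
  rw [aeval_X] at hH
  rw [Polynomial.map_mul, Polynomial.map_mul, hline] at hmap
  exact hmap.trans hH

theorem natDegree_add_natDegree (h : P * P' * D.line X = D.H X) :
    P.natDegree + P'.natDegree + D.q = D.Q * D.R := by
  have hne : P * P' * D.line X ≠ 0 := h ▸ D.H_ne_zero X_ne_zero
  have hPP' := left_ne_zero_of_mul hne
  rw [← D.natDegree_H (X_ne_zero (R := K)), ← h, natDegree_mul hPP' (right_ne_zero_of_mul hne),
    natDegree_mul (left_ne_zero_of_mul hPP') (right_ne_zero_of_mul hPP'),
    D.natDegree_line X_ne_zero]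

theorem leadingCoeff_mul_leadingCoeff (h : P * P' * D.line X = D.H X) :
    P.leadingCoeff * P'.leadingCoeff * X = X ^ D.Q := by
  have hlead := congrArg leadingCoeff h
  rw [leadingCoeff_mul, leadingCoeff_mul, D.leadingCoeff_line X_ne_zero,
    D.leadingCoeff_H X_ne_zero] at hlead
  linear_combination -hlead

section Specialize

variable {L : Type*} [Field L] [Algebra K L] {x : L}

theorem aeval_leadingCoeff_ne_zero (h : P * P' * D.line X = D.H X) (hx : x ≠ 0) :
    aeval x P.leadingCoeff ≠ 0 := by
  have hlead := congrArg (aeval x) (D.leadingCoeff_mul_leadingCoeff h)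
  rw [map_mul, map_mul, map_pow, aeval_X] at hlead
  exact left_ne_zero_of_mul (left_ne_zero_of_mul (hlead.trans_ne (pow_ne_zero _ hx)))

theorem natDegree_specialize (h : P * P' * D.line X = D.H X) (hx : x ≠ 0) :
    (specialize x P).natDegree = P.natDegree :=
  natDegree_map_of_leadingCoeff_ne_zero _ (D.aeval_leadingCoeff_ne_zero h hx)

theorem leadingCoeff_specialize (h : P * P' * D.line X = D.H X) (hx : x ≠ 0) :
    (specialize x P).leadingCoeff = aeval x P.leadingCoeff :=
  leadingCoeff_map_of_leadingCoeff_ne_zero _ (D.aeval_leadingCoeff_ne_zero h hx)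

theorem swap_factors {A : Type*} [CommRing A] [Algebra K A] {F F' : A[X]} {x : A}
    (h : F * F' * D.line x = D.H x) : F' * F * D.line x = D.H x :=
  mul_comm F F' ▸ h

theorem resultant_specialize (h : P * P' * D.line X = D.H X) (hx : x ≠ 0) :
    resultant (specialize x P) (specialize x P') = aeval x (resultant P P') := by
  rw [D.natDegree_specialize h hx, D.natDegree_specialize (D.swap_factors h) hx]
  exact resultant_map_map _ _ _ _ _

theorem separable_specialize (h : P * P' * D.line X = D.H X) (hx : x ≠ 0) :
    (specialize x P * specialize x P' * D.line x).Separable :=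
  D.specialize_mul_line h x ▸ D.separable_H hx

theorem isCoprime_specialize (h : P * P' * D.line X = D.H X) (hx : x ≠ 0) :
    IsCoprime (specialize x P) (specialize x P') :=
  (D.separable_specialize h hx).of_mul_left.isCoprime

theorem card_zeros_specialize {Ω : Type*} [Field Ω] [Algebra L Ω] [IsAlgClosed Ω]
    (h : P * P' * D.line X = D.H X) (hx : x ≠ 0) :
    (zeros (specialize x P) Ω).card = P.natDegree := by
  rw [card_zeros (D.separable_specialize h hx).of_mul_left.of_mul_left, D.natDegree_specialize h hx]

end Specialize

variable [IsAlgClosed K]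

theorem exists_leadingCoeff_eq (h : P * P' * D.line X = D.H X) :
    ∃ c : K, c ≠ 0 ∧ ∃ i : ℕ, P.leadingCoeff = C c * X ^ i :=
  exists_eq_C_mul_X_pow fun x hx => by simpa using D.aeval_leadingCoeff_ne_zero h hx

/-- Over `x ≠ 0` the fibre is separable, so the two factors meet only above `x = 0`. -/
theorem exists_resultant_eq (h : P * P' * D.line X = D.H X) :
    ∃ c : K, c ≠ 0 ∧ ∃ i : ℕ, resultant P P' = C c * X ^ i :=
  exists_eq_C_mul_X_pow fun x hx => by
    rw [← coe_aeval_eq_eval, ← D.resultant_specialize h hx]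
    exact resultant_ne_zero _ _ (D.isCoprime_specialize h hx)

theorem exists_sum_log_norm_sub_eq (k Ω : Type*) [NontriviallyNormedField k] [NormedField Ω]
    [NormedAlgebra k Ω] [Algebra K k] [Algebra K Ω] [IsScalarTower K k Ω] [IsTrivialNormOn K Ω]
    [IsAlgClosed Ω] (h : P * P' * D.line X = D.H X) :
    ∃ N : ℝ, ∀ x : k, x ≠ 0 →
      ∑ z ∈ zeros (specialize x P) Ω ×ˢ zeros (specialize x P') Ω, Real.log ‖z.1 - z.2‖ =
        N * Real.log ‖algebraMap k Ω x‖ := by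
  obtain ⟨c, hc, i, hlead⟩ := D.exists_leadingCoeff_eq h
  obtain ⟨c', hc', i', hlead'⟩ := D.exists_leadingCoeff_eq (D.swap_factors h)
  obtain ⟨d, hd, j, hres⟩ := D.exists_resultant_eq h
  refine ⟨j - P'.natDegree * i - P.natDegree * i', fun x hx => ?_⟩
  have hsep := (D.separable_specialize h hx).of_mul_left
  have hnorm := congrArg norm
    (algebraMap_resultant (Ω := Ω) hsep.of_mul_left hsep.of_mul_right)
  have hX := norm_ne_zero_iff.2 ((map_ne_zero (algebraMap k Ω)).2 hx)
  have hsub : ∀ z ∈ zeros (specialize x P) Ω ×ˢ zeros (specialize x P') Ω, ‖z.1 - z.2‖ ≠ 0 := by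
    intro z hz hz0
    obtain ⟨hz1, hz2⟩ := Finset.mem_product.1 hz
    rw [norm_eq_zero, sub_eq_zero] at hz0
    exact Finset.disjoint_left.1 (disjoint_zeros_of_isCoprime hsep.isCoprime) hz1 (hz0 ▸ hz2)
  rw [D.resultant_specialize h hx, D.leadingCoeff_specialize h hx,
    D.leadingCoeff_specialize (D.swap_factors h) hx, D.natDegree_specialize h hx,
    D.natDegree_specialize (D.swap_factors h) hx, hlead, hlead', hres] at hnorm
  simp only [norm_mul, norm_pow, norm_prod, ← aeval_algebraMap_apply, norm_aeval_C_mul_X_pow hc,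
    norm_aeval_C_mul_X_pow hc', norm_aeval_C_mul_X_pow hd] at hnorm
  have hlog := congrArg Real.log hnorm
  rw [Real.log_mul (by positivity) (Finset.prod_ne_zero_iff.2 hsub),
    Real.log_mul (by positivity) (by positivity), Real.log_prod hsub] at hlog
  simp only [Real.log_pow] at hlog
  linear_combination -hlog

end Bivariate

section LocalCounts

variable {K : Type*} [Field K] (D : CurveData K) {k : Type*} (Ω : Type*)
  [NontriviallyNormedField k] [NormedField Ω] [NormedAlgebra k Ω] [Algebra K k] [Algebra K Ω]

open Classical in
/-- The number of zeros in the closed part of the specialisation of `P` at the place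
`X = ϖ ^ (R - 1)` above zero. -/
noncomputable def closedCount (ϖ : k) (P : K[X][X]) : ℕ :=
  (zeros (specialize (ϖ ^ (D.R - 1)) P) Ω ∩ D.closedPart (algebraMap k Ω ϖ ^ (D.R - 1))).card

open Classical in
/-- The number of zeros of residue `c` of the specialisation of `P` at the place `X = ϖ⁻¹` above
infinity. -/
noncomputable def residueCount (ϖ : k) (P : K[X][X]) (c : K) : ℕ :=
  (zeros (specialize ϖ⁻¹ P) Ω ∩ D.residueClass (algebraMap k Ω ϖ⁻¹) c).card

variable {D Ω} [IsUltrametricDist Ω] [IsTrivialNormOn K Ω] [IsAlgClosed Ω]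
  {P P' : K[X][X]} {ϖ : k} {c : K} (hϖ : IsUniformizer ϖ) (h : P * P' * D.line X = D.H X)
include hϖ h

theorem residueCount_add_le (c : K) :
    D.residueCount Ω ϖ P c + D.residueCount Ω ϖ P' c ≤ D.Q :=
  (Nat.le_add_right _ _).trans (D.sum_card_zeros_inter_residueClass_le
    hϖ.one_lt_norm_algebraMap_inv (D.specialize_mul_line h ϖ⁻¹) c)

theorem four_mul_sum_residueCount_le :
    4 * ∑ c ∈ D.commonResidues, D.residueCount Ω ϖ P c * D.residueCount Ω ϖ P' c ≤
      D.q ^ (D.k - D.t).gcd D.t * D.Q ^ 2 := by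
  rw [Finset.mul_sum]
  refine (Finset.sum_le_card_nsmul _ _ (D.Q ^ 2) fun c _ => ?_).trans ?_
  · rw [← mul_assoc]
    exact (four_mul_le_pow_two_add _ _).trans
      (Nat.pow_le_pow_left (residueCount_add_le hϖ h c) 2)
  · exact Nat.mul_le_mul_right _ D.card_commonResidues_le

variable [IsScalarTower K k Ω]

theorem residueCount_add_lt (hc : c ^ D.q = c) :
    D.residueCount Ω ϖ P c + D.residueCount Ω ϖ P' c < D.Q :=
  D.card_zeros_inter_residueClass_lt hϖ.one_lt_norm_algebraMap_inv (D.specialize_mul_line h ϖ⁻¹) hc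

theorem q_add_one_dvd_residueCount (hm : D.k - D.t = 1) (ht : D.t = 2) (hc : c ^ D.q = c) :
    D.q + 1 ∣ D.residueCount Ω ϖ P c :=
  q_add_one_dvd_card_inter_residueClass hm ht hϖ (D.specialize_mul_line h ϖ⁻¹) hc

theorem closedCount_add : D.closedCount Ω ϖ P + D.closedCount Ω ϖ P' + D.q = D.Q := by
  have hnorm : ‖algebraMap k Ω (ϖ ^ (D.R - 1))‖ < 1 := by
    rw [norm_algebraMap']
    exact D.norm_pow_R_sub_one_lt_one hϖ.norm_lt_one
  simpa only [closedCount, map_pow] using D.card_zeros_inter_closedPart_add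
    (pow_ne_zero _ hϖ.ne_zero) hnorm (D.specialize_mul_line h (ϖ ^ (D.R - 1)))

theorem exists_natDegree_eq_Q_mul_add :
    ∃ b : ℕ, P.natDegree = D.Q * b + D.closedCount Ω ϖ P := by
  classical
  have hx0 : ϖ ^ (D.R - 1) ≠ 0 := pow_ne_zero _ hϖ.ne_zero
  have hfac := D.specialize_mul_line h (ϖ ^ (D.R - 1))
  have heval : (specialize (ϖ ^ (D.R - 1)) P).eval 0 ≠ 0 :=
    D.eval_ne_zero_of_eval_line_eq_zero hx0 hfac (by simp [line, D.q_pos.ne'])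
  obtain ⟨b, hb⟩ := D.Q_dvd_card_zeros_sdiff_closedPart (Ω := Ω) hϖ
    (hfac ▸ (dvd_mul_right _ _).mul_right _) heval
  refine ⟨b, ?_⟩
  rw [← D.card_zeros_specialize (Ω := Ω) h hx0, ← hb, closedCount, Finset.card_sdiff_add_card_inter]

variable [IsAlgClosed K]

theorem natDegree_eq_sum_residueCount (hm : D.k - D.t = 1) :
    P.natDegree = ∑ c ∈ D.commonResidues, D.residueCount Ω ϖ P c := by
  rw [← D.card_zeros_specialize (Ω := Ω) h (inv_ne_zero hϖ.ne_zero)]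
  exact card_zeros_eq_sum_residueClass hm hϖ.one_lt_norm_algebraMap_inv
    (D.specialize_mul_line h ϖ⁻¹ ▸ (dvd_mul_right _ _).mul_right _)

end LocalCounts

section PairSums

variable {K : Type*} [Field K] (D : CurveData K) {k Ω : Type*} [Field k] [NormedField Ω]
  [Algebra k Ω] [Algebra K k] [Algebra K Ω] [IsScalarTower K k Ω] {F F' : k[X]} {x : k}

open Classical in
theorem sum_log_norm_sub_eq (hx0 : x ≠ 0) (h : F * F' * D.line x = D.H x) {W : Finset Ω} {a b : ℝ}
    (ha : ∀ y ∈ W, y ≠ 0 → Real.log ‖y‖ = a)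
    (hb : ∀ y ∈ D.V (algebraMap k Ω x), y ∉ W → Real.log ‖y‖ = b) :
    ∑ z ∈ zeros F Ω ×ˢ zeros F' Ω, Real.log ‖z.1 - z.2‖ =
      {z ∈ zeros F Ω ×ˢ zeros F' Ω | z.1 - z.2 ∈ W}.card * a +
        ((zeros F Ω).card * (zeros F' Ω).card -
          {z ∈ zeros F Ω ×ˢ zeros F' Ω | z.1 - z.2 ∈ W}.card) * b := by
  have hsep := D.separable_H hx0
  rw [← h] at hsep
  have hF : F ∣ D.H x := Dvd.intro _ ((mul_assoc F F' _).symm.trans h)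
  have hF' : F' ∣ D.H x := Dvd.intro _ ((mul_assoc F' F _).symm.trans (D.swap_factors h))
  have hpair : ∀ z ∈ zeros F Ω ×ˢ zeros F' Ω,
      z.1 - z.2 ∈ D.V (algebraMap k Ω x) ∧ z.1 - z.2 ≠ 0 := by
    intro z hz
    obtain ⟨hz1, hz2⟩ := Finset.mem_product.1 hz
    refine ⟨D.sub_mem_V (by simpa using hx0) (D.zeros_subset_V hx0 hF hz1)
      (D.zeros_subset_V hx0 hF' hz2), fun hz0 => ?_⟩
    rw [sub_eq_zero] at hz0
    exact Finset.disjoint_left.1 (disjoint_zeros_of_isCoprime hsep.of_mul_left.isCoprime) hz1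
      (hz0 ▸ hz2)
  rw [← Nat.cast_mul, ← Finset.card_product]
  exact sum_eq_card_filter_mul_add _ (fun z : Ω × Ω => z.1 - z.2 ∈ W)
    (fun z hz hzW => ha _ hzW (hpair z hz).2) fun z hz hzW => hb _ (hpair z hz).1 hzW

end PairSums

section ProductFormula

variable {K : Type*} [Field K] [IsAlgClosed K] {D : CurveData K} {k Ω : Type*}
  [NontriviallyNormedField k] [NormedField Ω] [NormedAlgebra k Ω] [Algebra K k] [Algebra K Ω]
  [IsScalarTower K k Ω] [IsUltrametricDist Ω] [IsTrivialNormOn K Ω] [IsAlgClosed Ω]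
  [CompleteSpace k] [IsUltrametricDist k] [Algebra.IsAlgebraic k Ω] {P P' : K[X][X]} {ϖ : k}

theorem mul_eq_of_place_equations {Q R α β A N : ℝ} (hQ : 1 < Q) (hR : 1 < R)
    (h0 : N = α + (A - α) * -((Q - 1) / (Q * (R - 1))))
    (hinf : N = β * -(Q * (R - 1) / (Q - 1)) + (A - β)) :
    (Q - 1) * A = (Q - 1) * α + (Q * R - Q) * β := by
  have hQ1 : Q - 1 ≠ 0 := (sub_pos.2 hQ).ne'
  have hR1 : R - 1 ≠ 0 := (sub_pos.2 hR).ne'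
  have hQR : Q * R - 1 ≠ 0 := by nlinarith
  field_simp at h0 hinf
  refine mul_left_cancel₀ hQR ?_
  linear_combination (Q - 1) * h0 - (Q * R - Q) * hinf

/-- Comparing the sums of `log ‖y - y'‖` over pairs of zeros at the places above zero and infinity,
which are both governed by the resultant. -/
theorem exists_natDegree_mul_natDegree_eq (hϖ : IsUniformizer ϖ)
    (h : P * P' * D.line X = D.H X) : ∃ α β : ℕ,
      α ≤ D.closedCount Ω ϖ P * D.closedCount Ω ϖ P' ∧
      β ≤ ∑ c ∈ D.commonResidues, D.residueCount Ω ϖ P c * D.residueCount Ω ϖ P' c ∧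
      ((D.Q : ℝ) - 1) * (P.natDegree * P'.natDegree) = (D.Q - 1) * α + (D.Q * D.R - D.Q) * β := by
  have hx0 : ϖ ^ (D.R - 1) ≠ 0 := pow_ne_zero _ hϖ.ne_zero
  have hxi : ϖ⁻¹ ≠ 0 := inv_ne_zero hϖ.ne_zero
  have hf0 := D.specialize_mul_line h (ϖ ^ (D.R - 1))
  have hfi := D.specialize_mul_line h ϖ⁻¹
  have hn0 : ‖algebraMap k Ω (ϖ ^ (D.R - 1))‖ < 1 := by
    rw [norm_algebraMap']
    exact D.norm_pow_R_sub_one_lt_one hϖ.norm_lt_one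
  have hni := hϖ.one_lt_norm_algebraMap_inv (Ω := Ω)
  refine ⟨_, _, D.card_filter_sub_mem_closedPart_le hϖ (hf0 ▸ (dvd_mul_right _ _).mul_right _)
    (D.isCoprime_specialize h hx0), card_filter_sub_mem_openPart_le hϖ
    (hfi ▸ (dvd_mul_right _ _).mul_right _) (D.isCoprime_specialize h hxi), ?_⟩
  obtain ⟨N, hN⟩ := D.exists_sum_log_norm_sub_eq k Ω h
  have hx0' : algebraMap k Ω (ϖ ^ (D.R - 1)) ≠ 0 := by simpa using hx0
  have hsum0 := (hN _ hx0).symm.trans (D.sum_log_norm_sub_eq hx0 hf0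
    (fun y hy hy0 => congrArg Real.log (D.norm_eq_of_mem_closedPart hx0' hn0 hy hy0))
    fun y hy hyW => D.log_norm_of_notMem_closedPart hx0' hn0 hy hyW)
  have hsumi := (hN _ hxi).symm.trans (D.sum_log_norm_sub_eq hxi hfi
    (fun y hy hy0 => D.log_norm_of_mem_openPart hni hy hy0)
    fun y hy hyW => congrArg Real.log (D.norm_eq_of_notMem_openPart hni hy hyW))
  have hlog0 := (Real.log_neg (norm_pos_iff.2 hx0') hn0).ne
  have hlogi := (Real.log_pos hni).ne'
  rw [D.card_zeros_specialize h hx0, D.card_zeros_specialize (D.swap_factors h) hx0] at hsum0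
  rw [D.card_zeros_specialize h hxi, D.card_zeros_specialize (D.swap_factors h) hxi] at hsumi
  rw [← map_pow]
  refine mul_eq_of_place_equations (N := N) (Nat.one_lt_cast.2 D.one_lt_Q)
    (Nat.one_lt_cast.2 D.one_lt_R) (mul_right_cancel₀ hlog0 ?_) (mul_right_cancel₀ hlogi ?_)
  · linear_combination hsum0
  · linear_combination hsumi

end ProductFormula

end CurveData

/-! ### The degrees of two complementary factors -/

section Inequalities

theorem lt_of_dvd_or_not_dvd {t k : ℕ} (ht : 2 ≤ t)
    (h : (t ∣ k ∧ 3 * t ≤ k) ∨ (¬ t ∣ k ∧ 2 * t - 1 ≤ k)) : t < k := by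
  rcases h with ⟨-, h⟩ | ⟨hndvd, h⟩
  · omega
  · have hne : t ≠ k := fun htk => hndvd (htk ▸ dvd_rfl)
    omega

theorem gcd_sub_lt_or {t k : ℕ} (ht : 2 ≤ t)
    (h : (t ∣ k ∧ 3 * t ≤ k) ∨ (¬ t ∣ k ∧ 2 * t - 1 ≤ k)) :
    (t = 2 ∧ k - t = 1) ∨ (k - t).gcd t < k - t := by
  have htk := lt_of_dvd_or_not_dvd ht h
  rcases h with ⟨-, h⟩ | ⟨hndvd, h⟩
  · have := Nat.gcd_le_right (k - t) (zero_lt_two.trans_le ht)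
    omega
  · have hne : (k - t).gcd t ≠ t := fun heq =>
      hndvd ((Nat.dvd_sub_self_right.1 (Nat.gcd_eq_right_iff_dvd.1 heq)).resolve_right htk.not_ge)
    have hhalf : 2 * (k - t).gcd t ≤ t := by
      obtain ⟨d, hd⟩ := Nat.gcd_dvd_right (k - t) t
      have hd2 : 2 ≤ d := by
        by_contra! hd2
        interval_cases d <;> omega
      nlinarith
    rcases ht.eq_or_lt with rfl | ht
    · omega
    · omega

theorem two_mul_sq_le_nine_mul {T a a' : ℝ} (hs : a + a' = T) (ha : T ≤ 3 * a)
    (ha' : T ≤ 3 * a') : 2 * T ^ 2 ≤ 9 * (a * a') := by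
  nlinarith [mul_nonneg (sub_nonneg.2 ha) (sub_nonneg.2 ha')]

theorem eight_mul_le_mul {q Q R : ℝ} (hq : 2 ≤ q) (hQ : q ^ 2 ≤ Q) (hR : q ^ 2 ≤ R) :
    8 * q ≤ Q * R := by
  have hq3 : 2 ^ 3 ≤ q ^ 3 := pow_le_pow_left₀ zero_le_two hq 3
  have hQR : q ^ 2 * q ^ 2 ≤ Q * R := mul_le_mul hQ hR (by positivity) ((sq_nonneg q).trans hQ)
  nlinarith

theorem add_lt_mul_of_balanced {q Q R B a a' α β : ℝ} (hq : 2 ≤ q) (hQ : q ^ 2 ≤ Q)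
    (hR : q ^ 2 ≤ R) (hBR : 2 * B ≤ R) (hs : a + a' = Q * R - q) (ha : Q * R - q ≤ 3 * a)
    (ha' : Q * R - q ≤ 3 * a') (hα : 4 * α ≤ Q ^ 2) (hβ : 4 * β ≤ B * Q ^ 2) :
    (Q - 1) * α + (Q * R - Q) * β < (Q - 1) * (a * a') := by
  have hQ4 : 4 ≤ Q := by nlinarith
  have hR4 : 4 ≤ R := by nlinarith
  have hQ3 : 0 < Q ^ 3 := by positivity
  have hdeg : 49 * (Q * R) ^ 2 ≤ 288 * (a * a') := by
    have hbal := two_mul_sq_le_nine_mul hs ha ha'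
    have hsub : 7 * (Q * R) ≤ 8 * (Q * R - q) := by linarith [eight_mul_le_mul hq hQ hR]
    nlinarith [pow_le_pow_left₀ (by positivity) hsub 2]
  have hlower : 49 * (Q ^ 3 * R ^ 2) ≤ 384 * ((Q - 1) * (a * a')) := by
    have := mul_le_mul (show 3 * Q ≤ 4 * (Q - 1) by linarith) hdeg (by positivity) (by linarith)
    nlinarith
  have hzero : 4 * ((Q - 1) * α) ≤ Q ^ 3 := by nlinarith
  have hinf : 8 * ((Q * R - Q) * β) ≤ Q ^ 3 * (R ^ 2 - R) := by
    have hβ' : 8 * β ≤ R * Q ^ 2 := by nlinarith [sq_nonneg Q]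
    nlinarith [mul_le_mul_of_nonneg_left hβ' (show 0 ≤ Q * R - Q by nlinarith)]
  have hR2 : 0 < Q ^ 3 * (R ^ 2 + 48 * (R - 2)) := mul_pos hQ3 (by nlinarith)
  linarith

theorem mul_lt_mul_of_le {q N N' w w' b : ℤ} (hq : 2 ≤ q) (hN : 0 < N) (hNN : N ≤ N')
    (hNs : N + N' = q * (q - 1)) (hw : w + w' = q * (q - 1)) (hb : 0 ≤ b)
    (ha : (q + 1) * N = q ^ 2 * b + w) : w * w' < (q + 1) * (N * N') := by
  obtain ⟨j, rfl⟩ : ∃ j, N = q * b + j := ⟨N - q * b, by ring⟩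
  obtain rfl : w = q * b + j + q * j := by linear_combination -ha
  obtain rfl : w' = N' - q * j := by linear_combination hw - hNs
  have hjN : j ≤ q * b + j := le_add_of_nonneg_left (by positivity)
  set N := q * b + j
  have hkey : j * (N' - N) - q * j ^ 2 < N * N' := by
    have hpos : 0 < N * N' := mul_pos hN (hN.trans_le hNN)
    rcases le_or_gt j 0 with hj | _
    · nlinarith [mul_nonneg (neg_nonneg.2 hj) (sub_nonneg.2 hNN), sq_nonneg j]
    · nlinarith [mul_le_mul_of_nonneg_right hjN (sub_nonneg.2 hNN), sq_nonneg j]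
  nlinarith

theorem mul_sum_mul_le {ι : Type*} {s : Finset ι} {n n' : ι → ℤ} {q : ℤ}
    (hs : s.card ≤ q) (h₀ : ∀ i ∈ s, 0 ≤ n i) (h : ∀ i ∈ s, n i + n' i ≤ q - 1)
    (hsum : ∑ i ∈ s, n i + ∑ i ∈ s, n' i = q * (q - 1)) :
    q * ∑ i ∈ s, n i * n' i ≤ (∑ i ∈ s, n i) * ∑ i ∈ s, n' i := by
  have hterm : ∑ i ∈ s, n i * n' i ≤ (q - 1) * (∑ i ∈ s, n i) - ∑ i ∈ s, n i ^ 2 := by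
    rw [Finset.mul_sum, ← Finset.sum_sub_distrib]
    refine Finset.sum_le_sum fun i hi => ?_
    nlinarith [h₀ i hi, h i hi]
  have hcauchy : (∑ i ∈ s, n i) ^ 2 ≤ s.card * ∑ i ∈ s, n i ^ 2 := sq_sum_le_card_mul_sum_sq
  have hsq : 0 ≤ ∑ i ∈ s, n i ^ 2 := Finset.sum_nonneg fun i _ => sq_nonneg _
  rw [eq_sub_of_add_eq' hsum]
  nlinarith

theorem add_one_mul_le {q α β A : ℤ} (hq : 2 ≤ q) (hβ : q * β ≤ (q + 1) ^ 2 * A)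
    (h : (q ^ 2 - 1) * ((q + 1) ^ 2 * A) = (q ^ 2 - 1) * α + (q ^ 2 * q - q ^ 2) * β) :
    (q + 1) * A ≤ α := by
  have hcancel : (q + 1) * ((q + 1) ^ 2 * A) = (q + 1) * α + q * (q * β) :=
    mul_left_cancel₀ (show q - 1 ≠ 0 by omega) (by linear_combination h)
  nlinarith [mul_le_mul_of_nonneg_left hβ (show 0 ≤ q by omega)]

end Inequalities

namespace CurveData

section NoBalancedFactorization

variable {K : Type*} [Field K] [IsAlgClosed K] {D : CurveData K} {k Ω : Type*}
  [NontriviallyNormedField k] [NormedField Ω] [NormedAlgebra k Ω] [Algebra K k] [Algebra K Ω]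
  [IsScalarTower K k Ω] [IsUltrametricDist Ω] [IsTrivialNormOn K Ω] [IsAlgClosed Ω]
  {P P' : K[X][X]} {ϖ : k} (hϖ : IsUniformizer ϖ) (h : P * P' * D.line X = D.H X)
include Ω hϖ h

theorem exists_natDegree_eq_q_add_one_mul (hm : D.k - D.t = 1) (ht : D.t = 2) :
    ∃ N N' : ℕ,
    P.natDegree = (D.q + 1) * N ∧ P'.natDegree = (D.q + 1) * N' ∧
    (N + N' : ℤ) = D.q * (D.q - 1) ∧
    (D.q : ℤ) * (∑ c ∈ D.commonResidues, D.residueCount Ω ϖ P c * D.residueCount Ω ϖ P' c : ℕ) ≤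
      (D.q + 1) ^ 2 * (N * N') := by
  have hfix : ∀ c ∈ D.commonResidues, c ^ D.q = c := fun c hc => by
    rwa [mem_commonResidues, hm, Nat.gcd_one_left, pow_one] at hc
  have hcard : (D.commonResidues.card : ℤ) ≤ D.q := by
    simpa only [hm, Nat.gcd_one_left, pow_one, ← Nat.cast_le (α := ℤ)] using
      D.card_commonResidues_le
  choose! n hn using fun c hc => q_add_one_dvd_residueCount (Ω := Ω) hϖ h hm ht (hfix c hc)
  choose! n' hn' using fun c hc =>
    q_add_one_dvd_residueCount (Ω := Ω) hϖ (D.swap_factors h) hm ht (hfix c hc)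
  have hdeg := natDegree_eq_sum_residueCount (Ω := Ω) hϖ h hm
  have hdeg' := natDegree_eq_sum_residueCount (Ω := Ω) hϖ (D.swap_factors h) hm
  rw [Finset.sum_congr rfl hn, ← Finset.mul_sum] at hdeg
  rw [Finset.sum_congr rfl hn', ← Finset.mul_sum] at hdeg'
  have hle : ∀ c ∈ D.commonResidues, (n c + n' c : ℤ) ≤ D.q - 1 := by
    intro c hc
    have hlt := residueCount_add_lt (Ω := Ω) hϖ h (hfix c hc)
    rw [hn c hc, hn' c hc, Q, ht] at hlt
    zify at hlt
    nlinarith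
  have hsum : ((∑ c ∈ D.commonResidues, n c : ℕ) + (∑ c ∈ D.commonResidues, n' c : ℕ) : ℤ) =
      D.q * (D.q - 1) := by
    have htotal := D.natDegree_add_natDegree h
    rw [hdeg, hdeg', Q, R, hm, ht] at htotal
    push_cast [← Nat.cast_inj (R := ℤ)] at htotal ⊢
    refine mul_left_cancel₀ (show (D.q + 1 : ℤ) ≠ 0 by positivity) ?_
    linear_combination htotal
  refine ⟨_, _, hdeg, hdeg', hsum, ?_⟩
  rw [Finset.sum_congr rfl fun c hc => by rw [hn c hc, hn' c hc, mul_mul_mul_comm, ← sq],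
    ← Finset.mul_sum]
  push_cast at hsum ⊢
  rw [mul_left_comm]
  exact mul_le_mul_of_nonneg_left
    (mul_sum_mul_le hcard (fun c _ => Int.natCast_nonneg (n c)) hle hsum) (sq_nonneg _)

variable [CompleteSpace k] [IsUltrametricDist k] [Algebra.IsAlgebraic k Ω]

theorem natDegree_eq_zero_or_of_sub_eq_one (hm : D.k - D.t = 1) (ht : D.t = 2) :
    P.natDegree = 0 ∨ P'.natDegree = 0 := by
  obtain ⟨N, N', hN, hN', hsum, hres⟩ := exists_natDegree_eq_q_add_one_mul (Ω := Ω) hϖ h hm ht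
  obtain ⟨α, β, hα, hβ, hprod⟩ := exists_natDegree_mul_natDegree_eq (Ω := Ω) hϖ h
  obtain ⟨b, hb⟩ := exists_natDegree_eq_Q_mul_add (Ω := Ω) hϖ h
  obtain ⟨b', hb'⟩ := exists_natDegree_eq_Q_mul_add (Ω := Ω) hϖ (D.swap_factors h)
  have hclosed := closedCount_add (Ω := Ω) hϖ h
  have hR : D.R = D.q := by rw [R, hm, pow_one]
  rw [hN, Q, ht] at hb
  rw [hN', Q, ht] at hb'
  rw [Q, ht] at hclosed
  rw [hN, hN', Q, ht, hR] at hprod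
  have hq : (2 : ℤ) ≤ D.q := by exact_mod_cast D.one_lt_q
  have hprodZ : (D.q ^ 2 - 1 : ℤ) * ((D.q + 1) * N * ((D.q + 1) * N')) =
      (D.q ^ 2 - 1) * α + (D.q ^ 2 * D.q - D.q ^ 2) * β := by
    exact_mod_cast hprod
  have hβ' : (D.q : ℤ) * β ≤ (D.q + 1) ^ 2 * (N * N') :=
    (mul_le_mul_of_nonneg_left (Nat.cast_le.2 hβ) (Int.natCast_nonneg _)).trans hres
  have hle : (D.q + 1 : ℤ) * (N * N') ≤ α :=
    add_one_mul_le hq hβ' (by linear_combination hprodZ)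
  zify at hα hb hb' hclosed
  by_contra! hpos
  rw [hN, hN', mul_ne_zero_iff, mul_ne_zero_iff] at hpos
  refine (hle.trans hα).not_gt ?_
  rcases le_total N N' with hNN | hNN
  · exact mul_lt_mul_of_le hq (by omega) (by omega) hsum (by linarith) (Int.natCast_nonneg b) hb
  · rw [mul_comm (N : ℤ), mul_comm (D.closedCount Ω ϖ P : ℤ)]
    exact mul_lt_mul_of_le hq (by omega) (by omega) (by linarith) (by linarith)
      (Int.natCast_nonneg b') hb'

theorem two_mul_natDegree_lt_or_of_gcd_lt (hg : (D.k - D.t).gcd D.t < D.k - D.t) :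
    2 * P.natDegree < P'.natDegree ∨ 2 * P'.natDegree < P.natDegree := by
  by_contra! hbal
  obtain ⟨α, β, hα, hβ, hprod⟩ := exists_natDegree_mul_natDegree_eq (Ω := Ω) hϖ h
  have hdeg : (P.natDegree : ℝ) + P'.natDegree = D.Q * D.R - D.q := by
    rw [eq_sub_iff_add_eq]
    exact_mod_cast D.natDegree_add_natDegree h
  have hm : 2 ≤ D.k - D.t := by
    have := Nat.gcd_pos_of_pos_right (D.k - D.t) (zero_lt_two.trans_le D.two_le_t)
    omega
  have hB : 2 * D.q ^ (D.k - D.t).gcd D.t ≤ D.R := by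
    refine (Nat.mul_le_mul_right _ D.one_lt_q).trans ?_
    rw [← pow_succ']
    exact Nat.pow_le_pow_right D.q_pos hg
  have hα4 : 4 * α ≤ D.Q ^ 2 := by
    have hw := closedCount_add (Ω := Ω) hϖ h
    nlinarith [four_mul_le_pow_two_add (D.closedCount Ω ϖ P) (D.closedCount Ω ϖ P')]
  have hβ4 := (Nat.mul_le_mul_left 4 hβ).trans (four_mul_sum_residueCount_le hϖ h)
  refine (add_lt_mul_of_balanced (q := D.q) (B := (D.q ^ (D.k - D.t).gcd D.t : ℕ))
    (by exact_mod_cast D.one_lt_q) ?_ ?_ (by exact_mod_cast hB) hdeg ?_ ?_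
    (by exact_mod_cast hα4) (by exact_mod_cast hβ4)).ne' hprod
  · exact_mod_cast Nat.pow_le_pow_right D.q_pos D.two_le_t
  · exact_mod_cast Nat.pow_le_pow_right D.q_pos hm
  · rw [← hdeg]
    exact_mod_cast show P.natDegree + P'.natDegree ≤ 3 * P.natDegree by omega
  · rw [← hdeg]
    exact_mod_cast show P.natDegree + P'.natDegree ≤ 3 * P'.natDegree by omega

end NoBalancedFactorization

theorem two_mul_natDegree_lt_or {K : Type u} [Field K] [IsAlgClosed K] {D : CurveData K}
    {P P' : K[X][X]} (hD : (D.t = 2 ∧ D.k - D.t = 1) ∨ (D.k - D.t).gcd D.t < D.k - D.t)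
    (h : P * P' * D.line X = D.H X) :
    2 * P.natDegree < P'.natDegree ∨ 2 * P'.natDegree < P.natDegree := by
  obtain ⟨k, _, _, _, _, _, ϖ, hϖ⟩ := exists_discretely_normed_field K
  obtain ⟨Ω, _, _, _, _, _⟩ := exists_isAlgClosed_normedAlgebra k
  let _ : Algebra K Ω := ((algebraMap k Ω).comp (algebraMap K k)).toAlgebra
  have : IsScalarTower K k Ω := IsScalarTower.of_algebraMap_eq fun _ => rfl
  have := isTrivialNormOn_of_tower K k Ω
  rcases hD with ⟨ht, hm⟩ | hg
  · have hsum := D.natDegree_add_natDegree h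
    have hlt : D.q < D.Q * D.R :=
      (Nat.le_self_pow (zero_lt_two.trans_le D.two_le_t).ne' D.q).trans_lt D.Q_lt_Q_mul_R
    rcases natDegree_eq_zero_or_of_sub_eq_one (Ω := Ω) hϖ h hm ht with h0 | h0 <;> omega
  · exact two_mul_natDegree_lt_or_of_gcd_lt (Ω := Ω) hϖ h hg

end CurveData

/-! ### Absolutely irreducible factors -/

theorem natDegree_equivMvPolynomial_symm {K : Type*} [CommSemiring K]
    (P : MvPolynomial (Fin 2) K) :
    ((Bivariate.equivMvPolynomial K).symm P).natDegree = P.degreeOf 1 := by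
  let swapped : MvPolynomial (Fin 2) K →ₐ[K] K[X][X] :=
    ((mapAlgHom (MvPolynomial.uniqueAlgEquiv K (Fin 1)).toAlgHom).comp
      (MvPolynomial.finSuccEquiv K 1).toAlgHom).comp (MvPolynomial.rename (Equiv.swap 0 1))
  have heq : ((Bivariate.equivMvPolynomial K).symm : MvPolynomial (Fin 2) K →ₐ[K] K[X][X]) =
      swapped := by
    refine MvPolynomial.algHom_ext fun i => ?_
    fin_cases i
    · have hX : MvPolynomial.finSuccEquiv K 1 (MvPolynomial.X 1) = C (MvPolynomial.X 0) :=
        MvPolynomial.finSuccEquiv_X_succ (j := 0)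
      have huniq : MvPolynomial.uniqueAlgEquiv K (Fin 1) (MvPolynomial.X 0) = X :=
        MvPolynomial.eval₂_X _ _ _
      simp [swapped, hX, huniq]
    · simp [swapped, MvPolynomial.finSuccEquiv_apply]
  have hP := DFunLike.congr_fun heq P
  have hinj := (MvPolynomial.uniqueAlgEquiv K (Fin 1)).injective
  refine (congrArg natDegree hP).trans ((natDegree_map_eq_of_injective hinj _).trans ?_)
  exact (MvPolynomial.natDegree_finSuccEquiv _).trans
    (MvPolynomial.degreeOf_rename_of_injective (Equiv.injective _) 1)

namespace CurveData

theorem equivMvPolynomial_symm_mul_line {K : Type*} [Field K] (D : CurveData K)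
    {P : MvPolynomial (Fin 2) K}
    (hP : P * (MvPolynomial.X 0 ^ D.q * MvPolynomial.X 1 -
        MvPolynomial.X 0 * MvPolynomial.X 1 ^ D.q) =
      D.f (MvPolynomial.X 0) * MvPolynomial.X 1 ^ D.Q -
        D.f (MvPolynomial.X 1) * MvPolynomial.X 0 ^ D.Q) :
    (Bivariate.equivMvPolynomial K).symm P * D.line X = D.H X := by
  have hmap := congrArg (Bivariate.equivMvPolynomial K).symm hP
  have hf (Z : MvPolynomial (Fin 2) K) : (Bivariate.equivMvPolynomial K).symm (D.f Z) =
      D.f ((Bivariate.equivMvPolynomial K).symm Z) :=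
    D.map_f ((Bivariate.equivMvPolynomial K).symm : MvPolynomial (Fin 2) K →ₐ[K] K[X][X]) Z
  have hfC : D.f (C X : K[X][X]) = C (D.f X) := by simp [f]
  simpa only [map_mul, map_sub, map_pow, hf, Bivariate.equivMvPolynomial_symm_X_0,
    Bivariate.equivMvPolynomial_symm_X_1, hfC, line, H, C_pow] using hmap

theorem exists_exponent_of_strictMono {t M : ℕ} (ht : 2 ≤ t) {ks : Fin (M + 1) → ℕ}
    (hks : ks 0 = 0) (hkt : ∀ i : Fin (M + 1), 2 ≤ (i : ℕ) → t ≤ ks i) :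
    ∃ i, 0 < i ∧ i < t ∧ ∀ j, 0 < ks j → ks j < t → ks j = i := by
  have hone : ∀ j, 0 < ks j → ks j < t → (j : ℕ) = 1 := by
    intro j hpos hlt
    have hj0 : (j : ℕ) ≠ 0 := fun hj => by
      rw [Fin.ext (b := 0) hj, hks] at hpos
      exact hpos.false
    have hj2 : ¬ 2 ≤ (j : ℕ) := fun hj => (hkt j hj).not_gt hlt
    omega
  by_cases h : ∃ j, 0 < ks j ∧ ks j < t
  · obtain ⟨j, hpos, hlt⟩ := h
    exact ⟨ks j, hpos, hlt, fun j' hpos' hlt' =>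
      congrArg ks (Fin.ext ((hone j' hpos' hlt').trans (hone j hpos hlt).symm))⟩
  · exact ⟨1, one_pos, ht, fun j hpos hlt => absurd ⟨j, hpos, hlt⟩ h⟩

theorem exists_f_eq_sum {K : Type*} [Field K] {p e t M : ℕ} [Fact p.Prime] [CharP K p]
    (he : 0 < e) (ht : 2 ≤ t) {A : Fin (M + 1) → K} {ks : Fin (M + 1) → ℕ} (hks : ks 0 = 0)
    (hmono : StrictMono ks) (hA : A 0 ≠ 0) (hAM : A (Fin.last M) = 1)
    (hkt : ∀ i : Fin (M + 1), 2 ≤ (i : ℕ) → t ≤ ks i) (htk : t < ks (Fin.last M)) :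
    ∃ D : CurveData K, D.q = p ^ e ∧ D.t = t ∧ D.k = ks (Fin.last M) ∧
      ∀ {S : Type u} [CommRing S] [Algebra K S] (y : S),
        D.f y = ∑ i, algebraMap K S (A i) * y ^ (p ^ e) ^ ks i := by
  obtain ⟨i, hi, hit, hiu⟩ := exists_exponent_of_strictMono ht hks hkt
  have hc : ∀ j, ∑ l with ks l = ks j, A l = A j := fun j => by
    simp [hmono.injective.eq_iff, Finset.filter_eq']
  let D : CurveData K :=
    { p, e, t, i, k := ks (Fin.last M), c := fun j => ∑ l with ks l = j, A l
      prime := Fact.out, charP := ‹_›, e_pos := he, two_le_t := ht, t_lt_k := htk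
      c_zero_ne := by rwa [← hks, hc]
      c_k := by rw [hc, hAM]
      i_pos := hi, i_lt_t := hit
      c_eq_zero := fun j hj hjt hji => Finset.sum_eq_zero fun l hl => by
        obtain rfl := (Finset.mem_filter.1 hl).2
        exact absurd (hiu l hj hjt) hji }
  refine ⟨D, rfl, rfl, rfl, fun {S} _ _ y => ?_⟩
  have hmaps : ∀ l ∈ Finset.univ, ks l ∈ Finset.range (D.k + 1) := fun l _ =>
    Finset.mem_range.2 (Nat.lt_succ_of_le (hmono.monotone (Fin.le_last l)))
  rw [f, ← Finset.sum_fiberwise_of_maps_to hmaps]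
  refine Finset.sum_congr rfl fun j _ => ?_
  rw [map_sum, Finset.sum_mul]
  exact Finset.sum_congr rfl fun l hl => by rw [(Finset.mem_filter.1 hl).2]; rfl

end CurveData

theorem stmt_5_general {p e t M : ℕ} [Fact p.Prime] (he : 0 < e) (ht : 2 ≤ t) {F L : Type u}
    [Field F] [Finite F] [CharP F p] [Field L] [Algebra F L] [IsAlgClosure F L]
    {A : Fin (M + 1) → F} {ks : Fin (M + 1) → ℕ} (hks : ks 0 = 0) (hmono : StrictMono ks)
    (hA : A 0 ≠ 0) (hAM : A (Fin.last M) = 1)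
    (hkt : ∀ i : Fin (M + 1), 2 ≤ (i : ℕ) → t ≤ ks i)
    (hyp : (t ∣ ks (Fin.last M) ∧ 3 * t ≤ ks (Fin.last M)) ∨
      (¬ t ∣ ks (Fin.last M) ∧ 2 * t - 1 ≤ ks (Fin.last M)))
    {P : MvPolynomial (Fin 2) F}
    (hP : P * (MvPolynomial.X 0 ^ p ^ e * MvPolynomial.X 1 -
        MvPolynomial.X 0 * MvPolynomial.X 1 ^ p ^ e) =
      (∑ i, MvPolynomial.C (A i) * MvPolynomial.X 0 ^ (p ^ e) ^ ks i) *
          MvPolynomial.X 1 ^ (p ^ e) ^ t -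
        (∑ i, MvPolynomial.C (A i) * MvPolynomial.X 1 ^ (p ^ e) ^ ks i) *
          MvPolynomial.X 0 ^ (p ^ e) ^ t) :
    ∃ g : MvPolynomial (Fin 2) F, Irreducible g ∧ g ∣ P ∧
      Irreducible (MvPolynomial.map (algebraMap F L) g) := by
  have := IsAlgClosure.isAlgClosed F (K := L)
  have := IsAlgClosure.isAlgebraic (R := F) (K := L)
  have := charP_of_injective_algebraMap (algebraMap F L).injective p
  by_contra! hirr
  obtain ⟨P₁, P₂, hP₁₂, h₁, h₂⟩ :=
    HasBalancedFactorization.map_of_forall_not_irreducible (L := L) (j := 1) hirr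
  obtain ⟨D, hq, rfl, hk, hf⟩ := CurveData.exists_f_eq_sum (A := fun i => algebraMap F L (A i)) he
    ht hks hmono ((map_ne_zero_iff _ (algebraMap F L).injective).2 hA) (by rw [hAM, map_one]) hkt
    (lt_of_dvd_or_not_dvd ht hyp)
  have hcurve : (Bivariate.equivMvPolynomial L).symm P₁ * (Bivariate.equivMvPolynomial L).symm P₂ *
      D.line X = D.H X := by
    rw [← map_mul, hP₁₂]
    refine D.equivMvPolynomial_symm_mul_line ?_
    rw [hf, hf, CurveData.Q, hq]
    simpa [MvPolynomial.algebraMap_eq] using congrArg (MvPolynomial.map (algebraMap F L)) hP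
  have hdeg := CurveData.two_mul_natDegree_lt_or (hk ▸ gcd_sub_lt_or ht hyp) hcurve
  rw [natDegree_equivMvPolynomial_symm, natDegree_equivMvPolynomial_symm] at hdeg
  omega

end PolynomialFactors

/-- Let `q = p^e` be a prime power, `t ≥ 2`, `F = F_{q^r}`, and let
`f(X) = ∑_{i=0}^{M} A_i X^{q^{k_i}} ∈ F[X]` with `0 = k_0 < k_1 < ⋯ < k_M`, all `A_i ≠ 0`,
`A_M = 1`, `k_i ≠ t` for all `i`, and `k_i ≥ t` for all `i ≥ 2`.  If either `t ∣ k_M` and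
`k_M ≥ 3t`, or `t ∤ k_M` and `k_M ≥ 2t − 1`, then the polynomial
`C(X,Y) = (f(X)·Y^{q^t} − f(Y)·X^{q^t})/(X^q·Y − X·Y^q) ∈ F[X,Y]` has an irreducible
factor `g ∈ F[X,Y]` which remains irreducible over an algebraic closure of `F`. -/
theorem stmt_5 (p e : ℕ) [Fact p.Prime] (he : 0 < e) (q : ℕ) (hq : q = p ^ e)
    (r : ℕ) (hr : 1 ≤ r) (t : ℕ) (ht : 2 ≤ t)
    (F : Type) [Field F] [Fintype F] (hcard : Fintype.card F = q ^ r)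
    (M : ℕ) (A : Fin (M + 1) → F) (ks : Fin (M + 1) → ℕ)
    (hks0 : ks 0 = 0) (hmono : StrictMono ks)
    (hA : ∀ i, A i ≠ 0) (hAM : A (Fin.last M) = 1)
    (hkt : ∀ i, ks i ≠ t)
    (hkt2 : ∀ i : Fin (M + 1), 2 ≤ (i : ℕ) → t ≤ ks i)
    (hyp : (t ∣ ks (Fin.last M) ∧ 3 * t ≤ ks (Fin.last M)) ∨
           (¬ t ∣ ks (Fin.last M) ∧ 2 * t - 1 ≤ ks (Fin.last M)))
    (C : MvPolynomial (Fin 2) F)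
    (hC : C * ((MvPolynomial.X 0 : MvPolynomial (Fin 2) F) ^ q * MvPolynomial.X 1 -
            MvPolynomial.X 0 * (MvPolynomial.X 1) ^ q) =
          (∑ i, MvPolynomial.C (A i) * (MvPolynomial.X 0 : MvPolynomial (Fin 2) F) ^ q ^ ks i) *
              (MvPolynomial.X 1) ^ q ^ t -
            (∑ i, MvPolynomial.C (A i) * (MvPolynomial.X 1 : MvPolynomial (Fin 2) F) ^ q ^ ks i) *
              (MvPolynomial.X 0) ^ q ^ t) :
    ∃ g : MvPolynomial (Fin 2) F, Irreducible g ∧ g ∣ C ∧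
      Irreducible (MvPolynomial.map (algebraMap F (AlgebraicClosure F)) g) := by
  have : CharP F p := charP_of_card_eq_prime_pow (hcard.trans (by rw [hq, ← pow_mul]))
  exact stmt_5_general he ht hks0 hmono (hA 0) hAM hkt2 hyp (hq ▸ hC)
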